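/- arXiv:1810.06497 — 4 statements merged into one kernel-verified Lean document; each statement's English description precedes it below -/
import Mathlib

section
/- Let q be a nonzero complex number that is not a root of unity, with a fixed square root q^{1/2}, and let α : ℤ → ℂ have finite support. Define F(L) := Σ_{a ∈ ℤ} α(a) T_1(L, a; q) for nonnegative integers L. Then for every nonnegative integer L, (1 + q^L) Σ_{i≥0} q^{C(i,2)} [L choose i]_q F(i) = Σ_{a ∈ ℤ} α(a) (1 + q^a) q^{C(a,2)} [2L choose L-a]_q, where C(a,2) = a(a-1)/2 denotes the binomial coefficient. -/
/-- The finite q-Pochhammer symbol `(a;q)_n`. -/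
noncomputable def qPoch (a q : ℂ) (n : ℕ) : ℂ :=
  ∏ j ∈ Finset.range n, (1 - a * q ^ j)

/-- The infinite q-Pochhammer symbol `(a;q)_∞`. -/
noncomputable def qPochInf (a q : ℂ) : ℂ :=
  ∏' j : ℕ, (1 - a * q ^ j)

/-- `1/(q;q)_n` for an integer `n`, with the convention that it is `0` for `n < 0`. -/
noncomputable def qPochInvZ (q : ℂ) (n : ℤ) : ℂ :=
  if 0 ≤ n then (qPoch q q n.toNat)⁻¹ else 0

/-- The q-trinomial coefficient `(L, b; a; q)_2`. -/
noncomputable def qTrinomial (L : ℕ) (b a : ℤ) (q : ℂ) : ℂ :=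
  ∑' n : ℕ, q ^ ((n : ℤ) * ((n : ℤ) + b)) * qPoch q q L * qPochInvZ q (n : ℤ) *
    qPochInvZ q ((n : ℤ) + a) * qPochInvZ q ((L : ℤ) - 2 * (n : ℤ) - a)

/-- The q-trinomial coefficient `T_n(L, a; q)`, where `s` is a fixed square root of `q`. -/
noncomputable def qTriT (n : ℤ) (L : ℕ) (a : ℤ) (q s : ℂ) : ℂ :=
  s ^ ((L : ℤ) * ((L : ℤ) - n) - a * (a - n)) * qTrinomial L (a - n) a q⁻¹

/-- The Gaussian (q-binomial) coefficient `[N choose k]_q`, zero unless `0 ≤ k ≤ N`. -/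
noncomputable def qBinom (N k : ℤ) (q : ℂ) : ℂ :=
  if 0 ≤ k ∧ k ≤ N then
    qPoch q q N.toNat * (qPoch q q k.toNat)⁻¹ * (qPoch q q (N - k).toNat)⁻¹
  else 0

/-- The quadratic form `Q(m,n) = 2m² + 6mn + 6n²` from Capparelli's theorems. -/
def Qcap (m n : ℕ) : ℕ := 2 * m ^ 2 + 6 * m * n + 6 * n ^ 2

namespace BT

lemma qPoch_succ (q : ℂ) (n : ℕ) : qPoch q q (n+1) = qPoch q q n * (1 - q ^ (n+1)) := by
  unfold qPoch
  rw [Finset.prod_range_succ, pow_succ' q n]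

lemma qPoch_ne (q : ℂ) (hroot : ∀ k : ℕ, 0 < k → q ^ k ≠ 1) (n : ℕ) : qPoch q q n ≠ 0 := by
  induction n with
  | zero => simp [qPoch]
  | succ n ih =>
    rw [qPoch_succ]
    exact mul_ne_zero ih (sub_ne_zero.mpr (hroot (n+1) (by omega)).symm)

lemma g_neg (q : ℂ) {n : ℤ} (h : n < 0) : qPochInvZ q n = 0 := by
  unfold qPochInvZ
  rw [if_neg (by omega)]

lemma g_nonneg {q : ℂ} {n : ℤ} (h : qPochInvZ q n ≠ 0) : 0 ≤ n := by
  by_contra h'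
  exact h (g_neg q (by omega))

lemma g_nat (q : ℂ) (n : ℕ) : qPochInvZ q (n : ℤ) = (qPoch q q n)⁻¹ := by
  unfold qPochInvZ
  rw [if_pos (by omega)]
  simp

/-- the recurrence of the reciprocal symbol, valid for all integers -/
lemma g_rec (q : ℂ) (hroot : ∀ k : ℕ, 0 < k → q ^ k ≠ 1) (n : ℤ) :
    qPochInvZ q (n - 1) = (1 - q ^ n) * qPochInvZ q n := by
  rcases lt_trichotomy n 0 with h | h | h
  · rw [g_neg q h, g_neg q (by omega)]; simp
  · subst h; rw [g_neg q (by omega)]; simp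
  · obtain ⟨k, rfl⟩ : ∃ k : ℕ, n = (k : ℤ) + 1 := ⟨(n-1).toNat, by omega⟩
    have e : ((k : ℤ) + 1) = ((k + 1 : ℕ) : ℤ) := by push_cast; rfl
    rw [add_sub_cancel_right, e, g_nat, g_nat, qPoch_succ, zpow_natCast]
    have h1 := qPoch_ne q hroot k
    have h2 : (1 - q ^ (k+1)) ≠ 0 := sub_ne_zero.mpr (hroot (k+1) (by omega)).symm
    field_simp

lemma qBinom_eq (q : ℂ) (N : ℕ) (k : ℤ) :
    qBinom (N : ℤ) k q = qPoch q q N * qPochInvZ q k * qPochInvZ q ((N : ℤ) - k) := by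
  unfold qBinom
  by_cases h : 0 ≤ k ∧ k ≤ (N : ℤ)
  · rw [if_pos h]
    unfold qPochInvZ
    rw [if_pos h.1, if_pos (by omega)]
    simp
  · rw [if_neg h]
    by_cases h0 : 0 ≤ k
    · rw [g_neg q (n := (N : ℤ) - k) (by omega)]; simp
    · rw [g_neg q (n := k) (by omega)]; simp

lemma qBinom_zero (q : ℂ) (N k : ℤ) (h : k < 0 ∨ N < k) : qBinom N k q = 0 := by
  unfold qBinom
  rw [if_neg (by omega)]

lemma qBinom_symm (q : ℂ) (N : ℕ) (k : ℤ) :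
    qBinom (N : ℤ) ((N : ℤ) - k) q = qBinom (N : ℤ) k q := by
  rw [qBinom_eq, qBinom_eq, sub_sub_cancel]; ring

lemma pascal (q : ℂ) (hq : q ≠ 0) (hroot : ∀ k : ℕ, 0 < k → q ^ k ≠ 1) (N : ℕ) (k : ℤ) :
    qBinom ((N + 1 : ℕ) : ℤ) k q = qBinom (N : ℤ) (k - 1) q + q ^ k * qBinom (N : ℤ) k q := by
  rw [qBinom_eq, qBinom_eq, qBinom_eq, qPoch_succ, g_rec q hroot k]
  have e1 : (N : ℤ) - (k - 1) = (N + 1 : ℕ) - k := by push_cast; ring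
  have e2 : (N : ℤ) - k = ((N + 1 : ℕ) - k) - 1 := by push_cast; ring
  rw [e1, e2, g_rec q hroot, zpow_sub₀ hq, zpow_natCast]
  have := zpow_ne_zero k hq
  field_simp
  ring

lemma qBinom00 (q : ℂ) : qBinom 0 0 q = 1 := by
  simp [qBinom, qPoch]

lemma vander (q : ℂ) (hq : q ≠ 0) (hroot : ∀ k : ℕ, 0 < k → q ^ k ≠ 1) (N M : ℕ) : ∀ r : ℤ,
    ∑ k ∈ Finset.range (M + 1), qBinom (M : ℤ) (k : ℤ) q * qBinom (N : ℤ) (r - k) q *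
      q ^ (((M : ℤ) - k) * (r - k)) = qBinom ((M + N : ℕ) : ℤ) r q := by
  induction M with
  | zero => intro r; simp [qBinom00]
  | succ M ih =>
    intro r
    have e : (M + 1 + N) = (M + N) + 1 := by ring
    rw [e, pascal q hq hroot, ← ih, ← ih]
    have h1 : ∀ k ∈ Finset.range (M + 1 + 1),
        qBinom ((M + 1 : ℕ) : ℤ) (k : ℤ) q * qBinom (N : ℤ) (r - k) q *
          q ^ ((((M + 1 : ℕ) : ℤ) - k) * (r - k)) =
        qBinom (M : ℤ) ((k : ℤ) - 1) q * qBinom (N : ℤ) (r - k) q *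
          q ^ ((((M + 1 : ℕ) : ℤ) - k) * (r - k)) +
        q ^ r * (qBinom (M : ℤ) (k : ℤ) q * qBinom (N : ℤ) (r - k) q *
          q ^ (((M : ℤ) - k) * (r - k))) := by
      intro k _
      rw [pascal q hq hroot]
      have : q ^ ((((M + 1 : ℕ) : ℤ) - k) * (r - k)) * q ^ (k : ℤ) =
          q ^ r * q ^ (((M : ℤ) - k) * (r - k)) := by
        rw [← zpow_add₀ hq, ← zpow_add₀ hq]; congr 1; push_cast; ring
      linear_combination qBinom (M : ℤ) (k : ℤ) q * qBinom (N : ℤ) (r - k) q * this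
    rw [Finset.sum_congr rfl h1, Finset.sum_add_distrib]
    congr 1
    · rw [Finset.sum_range_succ']
      rw [qBinom_zero q _ (((0:ℕ) : ℤ) - 1) (by simp)]
      simp only [zero_mul, add_zero]
      refine Finset.sum_congr rfl fun k _ => ?_
      have e1 : (((k + 1 : ℕ) : ℤ) - 1) = k := by push_cast; ring
      have e2 : r - ((k + 1 : ℕ) : ℤ) = r - 1 - k := by push_cast; ring
      have e3 : ((M + 1 : ℕ) : ℤ) - ((k + 1 : ℕ) : ℤ) = M - k := by push_cast; ring
      rw [e1, e2, e3]
    · rw [← Finset.mul_sum, Finset.sum_range_succ]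
      rw [qBinom_zero q (M : ℤ) ((M + 1 : ℕ) : ℤ) (by right; push_cast; omega)]
      simp

lemma prod_binom (q : ℂ) (hq : q ≠ 0) (hroot : ∀ k : ℕ, 0 < k → q ^ k ≠ 1) (L : ℕ) (A B : ℤ) :
    qBinom (L : ℤ) A q * qBinom (L : ℤ) B q =
    ∑ m ∈ Finset.range (L + 1), qPoch q q L * q ^ ((A - m) * (B - m)) * qPochInvZ q (m : ℤ) *
      qPochInvZ q (A - m) * qPochInvZ q (B - m) * qPochInvZ q ((L : ℤ) - A - B + m) := by
  by_cases h : 0 ≤ A ∧ A ≤ L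
  · obtain ⟨A, rfl⟩ : ∃ k : ℕ, A = (k : ℤ) := ⟨A.toNat, by omega⟩
    obtain ⟨N, rfl⟩ : ∃ N : ℕ, L = A + N := ⟨L - A, by omega⟩
    rw [← vander q hq hroot N A B, Finset.mul_sum]
    have hsub : Finset.range (A + 1) ⊆ Finset.range (A + N + 1) := by
      intro x; simp only [Finset.mem_range]; omega
    rw [← Finset.sum_subset hsub]
    · refine Finset.sum_congr rfl fun m _ => ?_
      rw [qBinom_eq, qBinom_eq, qBinom_eq]
      have e1 : ((A + N : ℕ) : ℤ) - A = (N : ℕ) := by push_cast; ring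
      have e2 : ((A + N : ℕ) : ℤ) - A - B + m = N - (B - m) := by push_cast; ring
      rw [e2, e1, g_nat q A, g_nat q N]
      have h1 := qPoch_ne q hroot A
      have h2 := qPoch_ne q hroot N
      field_simp
    · intro m _ hm
      simp only [Finset.mem_range] at hm
      rw [g_neg q (n := (A : ℤ) - m) (by omega)]; simp
  · rw [qBinom_zero q _ A (by omega), zero_mul]
    symm
    refine Finset.sum_eq_zero fun m _ => ?_
    by_contra hne
    simp only [mul_ne_zero_iff, ← ne_eq] at hne
    have h1 := g_nonneg hne.1.1.2
    have h2 := g_nonneg hne.1.2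
    have h3 := g_nonneg hne.2
    omega

lemma central (q : ℂ) (hq : q ≠ 0) (hroot : ∀ k : ℕ, 0 < k → q ^ k ≠ 1) (L : ℕ) (a : ℤ) :
    ∑ B ∈ Finset.range (L + 1), qBinom (L : ℤ) (B : ℤ) q * qBinom (L : ℤ) (B + a) q *
      q ^ ((B : ℤ) * (B + a)) = qBinom (2 * (L : ℤ)) ((L : ℤ) - a) q := by
  have e : (2 * (L : ℤ)) = ((L + L : ℕ) : ℤ) := by push_cast; ring
  have e' : (L : ℤ) - a = ((L + L : ℕ) : ℤ) - (L + a) := by push_cast; ring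
  rw [e, e', qBinom_symm, ← vander q hq hroot, ← Finset.sum_range_reflect]
  refine Finset.sum_congr rfl fun k hk => ?_
  simp only [Finset.mem_range] at hk
  have : ((L + 1 - 1 - k : ℕ) : ℤ) = L - k := by omega
  rw [this, qBinom_symm]
  have : (L : ℤ) - k + a = L + a - k := by ring
  rw [this]

lemma telescope (q : ℂ) (hq : q ≠ 0) (hroot : ∀ k : ℕ, 0 < k → q ^ k ≠ 1) (L : ℕ) (a : ℤ) :
    (1 + q ^ L) * ∑ B ∈ Finset.range (L + 1), qBinom (L : ℤ) (B : ℤ) q * qBinom (L : ℤ) (B + a) q *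
      q ^ ((B : ℤ) * (B + a) - B) = (1 + q ^ a) * qBinom (2 * (L : ℤ)) ((L : ℤ) - a) q := by
  rcases Nat.eq_zero_or_pos L with rfl | hL
  · by_cases ha : a = 0
    · subst ha; simp [qBinom00]
    · rw [qBinom_zero q (2 * ((0 : ℕ) : ℤ)) _ (by push_cast; omega)]
      simp only [Nat.zero_add, Finset.sum_range_one]
      rw [qBinom_zero q _ (((0:ℕ) : ℤ) + a) (by push_cast; omega)]
      simp
  · rw [← central q hq hroot]
    have hz : (1 - q ^ L) ≠ 0 := sub_ne_zero.mpr (hroot L hL).symm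
    apply mul_left_cancel₀ hz
    rw [← sub_eq_zero]
    let H : ℕ → ℂ := fun B => qPoch q q L * qPoch q q L * (q ^ ((B : ℤ) * (B + a) - B) *
      qPochInvZ q ((B : ℤ) - 1) *
      qPochInvZ q ((L : ℤ) - B) * qPochInvZ q ((B : ℤ) + a - 1) * qPochInvZ q ((L : ℤ) - (B + a)))
    have key : ∀ B ∈ Finset.range (L + 1), (1 - q ^ L) * ((1 + q ^ L) *
        (qBinom (L : ℤ) (B : ℤ) q * qBinom (L : ℤ) (B + a) q * q ^ ((B : ℤ) * (B + a) - B)) -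
        (1 + q ^ a) * (qBinom (L : ℤ) (B : ℤ) q * qBinom (L : ℤ) (B + a) q *
        q ^ ((B : ℤ) * (B + a)))) = H B - H (B + 1) := by
      intro B _
      simp only [H, qBinom_eq]
      have e1 : ((B + 1 : ℕ) : ℤ) * (((B + 1 : ℕ) : ℤ) + a) - ((B + 1 : ℕ) : ℤ) =
        (B : ℤ) * (B + a) + (B + a) := by push_cast; ring
      have e2 : ((B + 1 : ℕ) : ℤ) - 1 = B := by push_cast; ring
      have e3 : (L : ℤ) - ((B + 1 : ℕ) : ℤ) = (L - B) - 1 := by push_cast; ring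
      have e4 : ((B + 1 : ℕ) : ℤ) + a - 1 = B + a := by push_cast; ring
      have e5 : (L : ℤ) - (((B + 1 : ℕ) : ℤ) + a) = (L - (B + a)) - 1 := by push_cast; ring
      rw [e1, e2, e3, e4, e5, g_rec q hroot (B : ℤ), g_rec q hroot ((L : ℤ) - B),
        g_rec q hroot ((B : ℤ) + a), g_rec q hroot ((L : ℤ) - (B + a))]
      simp only [zpow_sub₀ hq, zpow_add₀ hq]
      rw [← zpow_natCast q L]
      have hx := zpow_ne_zero (B : ℤ) hq
      have hy := zpow_ne_zero a hq
      generalize q ^ (B : ℤ) = x at *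
      generalize q ^ (L : ℤ) = z at *
      generalize q ^ a = y at *
      field_simp
      ring
    have := Finset.sum_congr rfl key
    rw [Finset.sum_range_sub', ← Finset.mul_sum, Finset.sum_sub_distrib, ← Finset.mul_sum,
      ← Finset.mul_sum, mul_sub] at this
    rw [this]
    simp only [H]
    rw [g_neg q (n := ((0:ℕ) : ℤ) - 1) (by simp),
      g_neg q (n := (L : ℤ) - ((L + 1 : ℕ) : ℤ)) (by push_cast; omega)]
    simp

lemma qPoch_inv (q s : ℂ) (hs : s ^ 2 = q) (hq : q ≠ 0) (n : ℕ) :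
    qPoch q⁻¹ q⁻¹ n = (-1) ^ (n : ℤ) * s ^ (-((n : ℤ) * (n + 1))) * qPoch q q n := by
  have hs0 : s ≠ 0 := by rintro rfl; simp at hs; exact hq hs.symm
  induction n with
  | zero => simp [qPoch]
  | succ n ih =>
    rw [qPoch_succ, qPoch_succ, ih]
    have e : -(((n + 1 : ℕ) : ℤ) * (((n + 1 : ℕ) : ℤ) + 1)) =
      -((n : ℤ) * (n + 1)) + (-(2 * ((n + 1 : ℕ) : ℤ))) := by push_cast; ring
    have e2 : s ^ (-(2 * ((n + 1 : ℕ) : ℤ))) = (q ^ (n+1))⁻¹ := by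
      rw [zpow_neg, zpow_mul, zpow_natCast]; norm_cast; rw [hs]
    rw [e, zpow_add₀ hs0, e2, inv_pow]
    have := pow_ne_zero (n+1) hq
    simp only [zpow_natCast]
    rw [pow_succ (-1 : ℂ)]
    field_simp
    ring

lemma g_inv (q s : ℂ) (hs : s ^ 2 = q) (hq : q ≠ 0) (n : ℤ) :
    qPochInvZ q⁻¹ n = (-1) ^ n * s ^ (n * (n + 1)) * qPochInvZ q n := by
  rcases lt_or_ge n 0 with h | h
  · rw [g_neg _ h, g_neg _ h, mul_zero]
  · obtain ⟨n, rfl⟩ : ∃ k : ℕ, n = (k : ℤ) := ⟨n.toNat, by omega⟩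
    rw [g_nat, g_nat, qPoch_inv q s hs hq, mul_inv, mul_inv, zpow_neg, inv_inv]
    congr 2
    rw [zpow_natCast, ← inv_pow]; norm_num

lemma T_eq (q s : ℂ) (hs : s ^ 2 = q) (hq : q ≠ 0) (L i : ℕ) (hi : i ≤ L) (a : ℤ) :
    qTriT 1 i a q s = ∑ n ∈ Finset.range (L + 1),
      s ^ (((i : ℤ) - 2 * n - a) * ((i : ℤ) - 2 * n - a - 1)) * qPoch q q i *
      qPochInvZ q (n : ℤ) * qPochInvZ q ((n : ℤ) + a) * qPochInvZ q ((i : ℤ) - 2 * n - a) := by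
  have hs0 : s ≠ 0 := by rintro rfl; simp at hs; exact hq hs.symm
  unfold qTriT qTrinomial
  rw [tsum_eq_sum (s := Finset.range (L + 1)), Finset.mul_sum]
  · refine Finset.sum_congr rfl fun n _ => ?_
    rw [qPoch_inv q s hs hq, g_inv q s hs hq, g_inv q s hs hq, g_inv q s hs hq]
    have sg : ((-1 : ℂ) ^ (i : ℤ)) * (-1) ^ (n : ℤ) * (-1) ^ ((n : ℤ) + a) *
        (-1) ^ ((i : ℤ) - 2 * n - a) = 1 := by
      rw [← zpow_add₀ (by norm_num), ← zpow_add₀ (by norm_num), ← zpow_add₀ (by norm_num)]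
      apply Even.neg_one_zpow
      exact ⟨i, by ring⟩
    have hqz : q⁻¹ ^ ((n : ℤ) * (n + (a - 1))) = s ^ (-(2 * ((n : ℤ) * (n + (a - 1))))) := by
      rw [zpow_neg, zpow_mul s 2, inv_zpow]; norm_cast; rw [hs]
    have ex : s ^ ((i : ℤ) * ((i : ℤ) - 1) - a * (a - 1)) *
        s ^ (-(2 * ((n : ℤ) * (n + (a - 1))))) * s ^ (-((i : ℤ) * (i + 1))) *
        s ^ ((n : ℤ) * (n + 1)) * s ^ (((n : ℤ) + a) * (n + a + 1)) *
        s ^ (((i : ℤ) - 2 * n - a) * ((i : ℤ) - 2 * n - a + 1)) =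
        s ^ (((i : ℤ) - 2 * n - a) * ((i : ℤ) - 2 * n - a - 1)) := by
      simp only [← zpow_add₀ hs0]
      congr 1; ring
    rw [hqz, ← ex]
    linear_combination (s ^ ((i : ℤ) * ((i : ℤ) - 1) - a * (a - 1)) *
        s ^ (-(2 * ((n : ℤ) * (n + (a - 1))))) * s ^ (-((i : ℤ) * (i + 1))) *
        s ^ ((n : ℤ) * (n + 1)) * s ^ (((n : ℤ) + a) * (n + a + 1)) *
        s ^ (((i : ℤ) - 2 * n - a) * ((i : ℤ) - 2 * n - a + 1)) * qPoch q q i *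
      qPochInvZ q (n : ℤ) * qPochInvZ q ((n : ℤ) + a) * qPochInvZ q ((i : ℤ) - 2 * n - a)) * sg
  · intro n hn
    by_contra hne
    simp only [mul_ne_zero_iff, ← ne_eq] at hne
    have h2 := g_nonneg hne.1.2
    have h3 := g_nonneg hne.2
    simp only [Finset.mem_range] at hn
    omega

lemma half_pow (q s : ℂ) (hs : s ^ 2 = q) (a : ℤ) :
    q ^ (a * (a - 1) / 2) = s ^ (a * (a - 1)) := by
  have h : 2 * (a * (a - 1) / 2) = a * (a - 1) :=
    Int.mul_ediv_cancel' (Int.even_mul_pred_self a).two_dvd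
  conv_rhs => rw [← h, zpow_mul]
  norm_cast
  rw [hs]

lemma half_pow_nat (q s : ℂ) (hs : s ^ 2 = q) (i : ℕ) :
    q ^ (i * (i - 1) / 2) = s ^ ((i : ℤ) * (i - 1)) := by
  rw [← half_pow q s hs, ← zpow_natCast]
  congr 1
  cases i with
  | zero => simp
  | succ n => push_cast; simp

lemma inner (q s : ℂ) (hs : s ^ 2 = q) (hq : q ≠ 0) (hroot : ∀ k : ℕ, 0 < k → q ^ k ≠ 1)
    (L : ℕ) (a : ℤ) :
    ∑ i ∈ Finset.range (L + 1), q ^ (i * (i - 1) / 2) * qBinom (L : ℤ) (i : ℤ) q * qTriT 1 i a q s =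
    q ^ (a * (a - 1) / 2) * ∑ B ∈ Finset.range (L + 1), qBinom (L : ℤ) (B : ℤ) q *
      qBinom (L : ℤ) (B + a) q * q ^ ((B : ℤ) * (B + a) - B) := by
  have hs0 : s ≠ 0 := by rintro rfl; simp at hs; exact hq hs.symm
  have hqz : ∀ z : ℤ, q ^ z = s ^ (2 * z) := by
    intro z; rw [zpow_mul]; norm_cast; rw [hs]
  have hl : ∀ i ∈ Finset.range (L + 1),
      q ^ (i * (i - 1) / 2) * qBinom (L : ℤ) (i : ℤ) q * qTriT 1 i a q s =
      ∑ n ∈ Finset.range (L + 1),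
        s ^ ((i : ℤ) * (i - 1) + ((i : ℤ) - 2 * n - a) * ((i : ℤ) - 2 * n - a - 1)) *
        (qPoch q q L * qPochInvZ q ((L : ℤ) - i) * qPochInvZ q (n : ℤ) * qPochInvZ q ((n : ℤ) + a) *
          qPochInvZ q ((i : ℤ) - 2 * n - a)) := by
    intro i hi
    simp only [Finset.mem_range] at hi
    rw [T_eq q s hs hq L i (by omega), Finset.mul_sum]
    refine Finset.sum_congr rfl fun n _ => ?_
    rw [half_pow_nat q s hs, qBinom_eq, g_nat q i, zpow_add₀ hs0]
    have := qPoch_ne q hroot i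
    field_simp
  have hr : ∀ B ∈ Finset.range (L + 1), q ^ (a * (a - 1) / 2) * (qBinom (L : ℤ) (B : ℤ) q *
      qBinom (L : ℤ) (B + a) q * q ^ ((B : ℤ) * (B + a) - B)) =
      ∑ m ∈ Finset.range (L + 1),
        s ^ (a * (a - 1) + 2 * ((B : ℤ) * (B + a) - B) + 2 * (((B : ℤ) - m) * (B + a - m))) *
        (qPoch q q L * qPochInvZ q (m : ℤ) * qPochInvZ q ((B : ℤ) - m) *
          qPochInvZ q ((B : ℤ) + a - m) * qPochInvZ q ((L : ℤ) - B - (B + a) + m)) := by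
    intro B _
    rw [prod_binom q hq hroot, Finset.sum_mul, Finset.mul_sum]
    refine Finset.sum_congr rfl fun m _ => ?_
    rw [half_pow q s hs, zpow_add₀ hs0, zpow_add₀ hs0, hqz, hqz]
    ring
  rw [Finset.mul_sum, Finset.sum_congr rfl hl, Finset.sum_congr rfl hr,
    ← Finset.sum_product', ← Finset.sum_product']
  refine Finset.sum_bij_ne_zero
    (fun p _ _ => (((p.1 : ℤ) - p.2 - a).toNat, ((p.1 : ℤ) - 2 * p.2 - a).toNat)) ?_ ?_ ?_ ?_
  · rintro ⟨i, n⟩ h hne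
    simp only [mul_ne_zero_iff, ← ne_eq] at hne
    have h1 := g_nonneg hne.2.1.1.1.2
    have h2 := g_nonneg hne.2.1.2
    have h3 := g_nonneg hne.2.2
    simp only [Finset.mem_product, Finset.mem_range] at h ⊢
    omega
  · rintro ⟨i, n⟩ h hne ⟨i', n'⟩ h' hne' heq
    simp only [mul_ne_zero_iff, ← ne_eq] at hne hne'
    have h2 := g_nonneg hne.2.1.2
    have h3 := g_nonneg hne.2.2
    have h2' := g_nonneg hne'.2.1.2
    have h3' := g_nonneg hne'.2.2
    simp only [Prod.mk.injEq] at heq ⊢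
    omega
  · rintro ⟨B, m⟩ h hne
    have hne0 := hne
    simp only [mul_ne_zero_iff, ← ne_eq] at hne
    have h1 := g_nonneg hne.2.1.1.2
    have h2 := g_nonneg hne.2.1.2
    have h3 := g_nonneg hne.2.2
    simp only [Finset.mem_product, Finset.mem_range] at h
    obtain ⟨i, hi⟩ : ∃ i : ℕ, (i : ℤ) = 2 * B + a - m := ⟨(2 * B + a - m : ℤ).toNat, by omega⟩
    obtain ⟨n, hn⟩ : ∃ n : ℕ, (n : ℤ) = B - m := ⟨(B - m : ℤ).toNat, by omega⟩
    refine ⟨(i, n), ?_, ?_, ?_⟩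
    · simp only [Finset.mem_product, Finset.mem_range]; omega
    · simp only [hi, hn, mul_ne_zero_iff, ← ne_eq]
      refine ⟨zpow_ne_zero _ hs0, ⟨⟨⟨hne.2.1.1.1.1, ?_⟩, hne.2.1.1.2⟩, ?_⟩, ?_⟩
      · convert hne.2.2 using 2; ring
      · convert hne.2.1.2 using 2; ring
      · convert hne.2.1.1.1.2 using 2; ring
    · simp only [Prod.mk.injEq]; omega
  · rintro ⟨i, n⟩ h hne
    simp only [mul_ne_zero_iff, ← ne_eq] at hne
    have h2 := g_nonneg hne.2.1.2
    have h3 := g_nonneg hne.2.2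
    have c1 : ((((i : ℤ) - n - a).toNat : ℕ) : ℤ) = i - n - a := by omega
    have c2 : ((((i : ℤ) - 2 * n - a).toNat : ℕ) : ℤ) = i - 2 * n - a := by omega
    simp only [c1, c2]
    have d1 : (i : ℤ) - n - a - (i - 2 * n - a) = n := by ring
    have d2 : (i : ℤ) - n - a + a - (i - 2 * n - a) = n + a := by ring
    have d3 : (L : ℤ) - (i - n - a) - (i - n - a + a) + (i - 2 * n - a) = L - i := by ring
    rw [d1, d2, d3]
    have ee : (i : ℤ) * (i - 1) + ((i : ℤ) - 2 * n - a) * ((i : ℤ) - 2 * n - a - 1) =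
      a * (a - 1) + 2 * (((i : ℤ) - n - a) * (i - n - a + a) - (i - n - a)) +
        2 * ((n : ℤ) * (n + a)) := by ring
    rw [ee]
    ring

end BT

theorem bailey_type_T1 (q s : ℂ) (hs : s ^ 2 = q) (hq : q ≠ 0) (hroot : ∀ k : ℕ, 0 < k → q ^ k ≠ 1)
    (α : ℤ → ℂ) (hα : (Function.support α).Finite)
    (F : ℕ → ℂ) (hF : ∀ L : ℕ, F L = ∑ᶠ a : ℤ, α a * qTriT 1 L a q s) (L : ℕ) :
    (1 + q ^ L) * (∑' i : ℕ, q ^ (i * (i - 1) / 2) * qBinom (L : ℤ) (i : ℤ) q * F i) =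
    ∑ᶠ a : ℤ, α a * (1 + q ^ a) * q ^ (a * (a - 1) / 2) * qBinom (2 * (L : ℤ)) ((L : ℤ) - a) q := by
  have hF' : ∀ i, F i = ∑ a ∈ hα.toFinset, α a * qTriT 1 i a q s := by
    intro i
    rw [hF]
    apply finsum_eq_sum_of_support_subset
    intro a ha
    simp only [Function.mem_support, mul_ne_zero_iff] at ha
    simpa using ha.1
  rw [finsum_eq_sum_of_support_subset (s := hα.toFinset)]
  · rw [tsum_eq_sum (s := Finset.range (L + 1))]
    · simp only [hF', Finset.mul_sum]
      rw [Finset.sum_comm]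
      refine Finset.sum_congr rfl fun a _ => ?_
      have h1 := BT.inner q s hs hq hroot L a
      have h2 := BT.telescope q hq hroot L a
      have h3 : ∑ i ∈ Finset.range (L + 1), (1 + q ^ L) * (q ^ (i * (i - 1) / 2) *
          qBinom (L : ℤ) (i : ℤ) q * (α a * qTriT 1 i a q s)) = (1 + q ^ L) * α a *
          ∑ i ∈ Finset.range (L + 1), q ^ (i * (i - 1) / 2) * qBinom (L : ℤ) (i : ℤ) q *
            qTriT 1 i a q s := by
        rw [Finset.mul_sum]
        exact Finset.sum_congr rfl fun i _ => by ring
      rw [h3, h1]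
      linear_combination α a * q ^ (a * (a - 1) / 2) * h2
    · intro i hi
      simp only [Finset.mem_range] at hi
      rw [BT.qBinom_zero q _ _ (by omega)]; simp
  · intro a ha
    simp only [Function.mem_support, mul_ne_zero_iff] at ha
    simpa using ha.1.1.1
end

section
/- For every nonnegative integer M and every nonzero complex number q that is not a root of unity, Σ_{m,n≥0} q^{Q(m,n)} (q³;q³)_M / ( (q;q)_m (q³;q³)_n (q³;q³)_{M-2n-m} ) = Σ_{j=-M}^{M} q^{3j²+j} [2M choose M+j]_{q³}. -/
theorem cap_inv_rec (p : ℂ) (h : ∀ k : ℕ, 0 < k → p ^ k ≠ 1) (k : ℤ) :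
    qPochInvZ p (k - 1) = (1 - p ^ k) * qPochInvZ p k := by
  rcases lt_trichotomy k 0 with hk | hk | hk
  · simp [qPochInvZ, not_le.mpr hk, show ¬ (1 ≤ k) by omega]
  · subst hk; simp [qPochInvZ]
  · obtain ⟨n, rfl⟩ : ∃ n : ℕ, k = (n : ℤ) + 1 := ⟨(k - 1).toNat, by omega⟩
    have h1 : (1 : ℂ) - p ^ (n + 1) ≠ 0 := sub_ne_zero.mpr (Ne.symm (h _ (by omega)))
    have e : ((n : ℤ) + 1).toNat = n + 1 := by omega
    have e2 : p ^ ((n : ℤ) + 1) = p ^ (n + 1) := by exact_mod_cast zpow_natCast p (n + 1)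
    rw [e2]
    simp only [qPochInvZ, add_sub_cancel_right, e, Int.toNat_natCast]
    rw [if_pos (by omega), if_pos (by omega)]
    simp only [qPoch, Finset.prod_range_succ]
    rw [← pow_succ', mul_inv]
    field_simp

theorem cap_inv_neg (p : ℂ) (k : ℤ) (hk : k < 0) : qPochInvZ p k = 0 := by
  simp [qPochInvZ, not_le.mpr hk]

theorem cap_inv_zero (p : ℂ) : qPochInvZ p 0 = 1 := by
  simp [qPochInvZ, qPoch]

theorem cap_poch_ne (p : ℂ) (h : ∀ k : ℕ, 0 < k → p ^ k ≠ 1) (n : ℕ) : qPoch p p n ≠ 0 := by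
  rw [qPoch, Finset.prod_ne_zero_iff]
  intro j _
  rw [← pow_succ']
  exact sub_ne_zero.mpr (Ne.symm (h _ (by omega)))

theorem cap_inv_nat (p : ℂ) (n : ℕ) : qPochInvZ p n = (qPoch p p n)⁻¹ := by
  simp [qPochInvZ]

theorem cap_reindex (e : ℤ ≃ ℤ) (S T : Finset ℤ) (f g : ℤ → ℂ) (hfg : ∀ k, f (e k) = g k)
    (hS : ∀ k, f k ≠ 0 → k ∈ S) (hT : ∀ k, g k ≠ 0 → k ∈ T) :
    ∑ k ∈ S, f k = ∑ k ∈ T, g k := by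
  rw [← finsum_eq_sum_of_support_subset f (fun k hk => hS k hk),
    ← finsum_eq_sum_of_support_subset g (fun k hk => hT k hk), ← finsum_comp_equiv e]
  exact finsum_congr hfg

noncomputable def capBin (p : ℂ) (A : ℕ) (k : ℤ) : ℂ :=
  qPoch p p A * qPochInvZ p k * qPochInvZ p (A - k)

theorem capBin_supp (p : ℂ) (A : ℕ) (k : ℤ) (h : capBin p A k ≠ 0) : 0 ≤ k ∧ k ≤ A := by
  by_contra hc
  apply h
  rcases lt_or_ge k 0 with hk | hk
  · simp [capBin, cap_inv_neg p k hk]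
  · simp [capBin, cap_inv_neg p (A - k) (by omega)]

theorem capBin_succ (p : ℂ) (hp : p ≠ 0) (h : ∀ k : ℕ, 0 < k → p ^ k ≠ 1) (A : ℕ) (k : ℤ) :
    capBin p (A + 1) k = capBin p A (k - 1) + p ^ k * capBin p A k := by
  have h1 := cap_inv_rec p h k
  have h2 := cap_inv_rec p h (A + 1 - k)
  have e : (A : ℤ) + 1 - k - 1 = A - k := by ring
  have e5 : (A : ℤ) - (k - 1) = A + 1 - k := by ring
  have e3 : qPoch p p (A + 1) = qPoch p p A * (1 - p ^ (A + 1)) := by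
    simp only [qPoch, Finset.prod_range_succ]; rw [← pow_succ']
  have e4 : p ^ (A + 1) = p ^ k * p ^ ((A : ℤ) + 1 - k) := by
    rw [← zpow_add₀ hp, ← zpow_natCast]; congr 1; push_cast; ring
  rw [e] at h2
  simp only [capBin, h1, e5, h2, e3, e4]
  push_cast
  ring

theorem cap_transfer (p : ℂ) (hp : p ≠ 0) (h : ∀ k : ℕ, 0 < k → p ^ k ≠ 1) (g : ℕ → ℤ → ℂ)
    (hg : ∀ A B, g (A + 1) B = g A (B - 1) + p ^ B * g A B) (A : ℕ) :
    ∀ (B : ℤ) (T : Finset ℤ), Finset.Icc 0 (A : ℤ) ⊆ T →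
    ∑ k ∈ T, capBin p A k * p ^ ((A - k) * (B - k)) * g 0 (B - k) = g A B := by
  induction A with
  | zero =>
    intro B T hT
    rw [Finset.sum_eq_single 0]
    · simp [capBin, cap_inv_zero, qPoch]
    · intro k _ hk
      have : capBin p 0 k = 0 := by
        by_contra hc
        have := capBin_supp p 0 k hc
        push_cast at this
        omega
      simp [this]
    · intro h0
      exact absurd (hT (by simp)) h0
  | succ A ih =>
    intro B T hT
    rw [hg, ← ih (B - 1) (Finset.Icc 0 (A : ℤ)) (le_refl _), ← ih B T
      (subset_trans (Finset.Icc_subset_Icc_right (by push_cast; omega)) hT), Finset.mul_sum]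
    have : ∑ k ∈ Finset.Icc 0 (A : ℤ), capBin p A k * p ^ ((A - k) * (B - 1 - k)) * g 0 (B - 1 - k)
        = ∑ k ∈ T, capBin p A (k - 1) * p ^ ((A + 1 - k) * (B - k)) * g 0 (B - k) := by
      apply cap_reindex (Equiv.subRight 1)
      · intro k
        simp only [Equiv.subRight_apply]
        rw [show (A : ℤ) - (k - 1) = A + 1 - k by ring, show B - 1 - (k - 1) = B - k by ring]
      · intro k hk
        have := capBin_supp p A k (left_ne_zero_of_mul (left_ne_zero_of_mul hk))
        simpa using this
      · intro k hk
        have := capBin_supp p A (k-1) (left_ne_zero_of_mul (left_ne_zero_of_mul hk))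
        apply hT
        rw [Finset.mem_Icc]; push_cast; omega
    rw [this, ← Finset.sum_add_distrib]
    apply Finset.sum_congr rfl
    intro k _
    rw [capBin_succ p hp h]
    have e4 : p ^ B * p ^ (((A : ℤ) - k) * (B - k)) = p ^ k * p ^ (((A : ℤ) + 1 - k) * (B - k)) := by
      rw [← zpow_add₀ hp, ← zpow_add₀ hp]; congr 1; ring
    push_cast
    linear_combination (-capBin p A k * g 0 (B - k)) * e4

theorem cap_V (p : ℂ) (hp : p ≠ 0) (h : ∀ k : ℕ, 0 < k → p ^ k ≠ 1) (M : ℕ) (a b : ℤ)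
    (ha : a ∈ Finset.Icc 0 (M : ℤ)) :
    ∑ n ∈ Finset.Icc 0 (M : ℤ), p ^ ((a - n) * (b - n)) * qPochInvZ p (a - n) * qPochInvZ p (b - n)
      * qPochInvZ p n = qPochInvZ p a * qPochInvZ p b := by
  rw [Finset.mem_Icc] at ha
  lift a to ℕ using ha.1
  have := cap_transfer p hp h (fun _ B => qPochInvZ p B)
    (fun A B => by rw [cap_inv_rec p h B]; ring) a b (Finset.Icc 0 (M : ℤ))
    (Finset.Icc_subset_Icc_right ha.2)
  rw [← this, cap_inv_nat, Finset.mul_sum]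
  apply Finset.sum_congr rfl
  intro k _
  have := cap_poch_ne p h a
  simp only [capBin]
  field_simp

theorem cap_W (p : ℂ) (hp : p ≠ 0) (h : ∀ k : ℕ, 0 < k → p ^ k ≠ 1) (K M : ℕ) (r s : ℤ)
    (hr : r ∈ Finset.Icc 0 (K : ℤ)) (hKM : K ≤ M) :
    ∑ n ∈ Finset.Icc 0 (K : ℤ), p ^ ((r - n) * (s - n)) * qPochInvZ p (r - n) * qPochInvZ p (s - n)
      * qPochInvZ p n * qPochInvZ p (M - r - s + n)
      = qPoch p p M * qPochInvZ p r * qPochInvZ p s * qPochInvZ p (M - r) * qPochInvZ p (M - s) := by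
  rw [Finset.mem_Icc] at hr
  lift r to ℕ using hr.1
  obtain ⟨N, rfl⟩ : ∃ N, M = N + r := ⟨M - r, by omega⟩
  have := cap_transfer p hp h (fun A B => capBin p (N + A) B)
    (fun A B => by rw [← add_assoc, capBin_succ p hp h]) r s (Finset.Icc 0 (K : ℤ))
    (Finset.Icc_subset_Icc_right hr.2)
  have hr' := cap_poch_ne p h r
  have hN' := cap_poch_ne p h N
  have e1 : ((N + r : ℕ) : ℤ) - r = N := by push_cast; ring
  rw [e1, cap_inv_nat, cap_inv_nat]
  have e2 : qPoch p p (N + r) * (qPoch p p r)⁻¹ * qPochInvZ p s * (qPoch p p N)⁻¹ *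
    qPochInvZ p ((N + r : ℕ) - s) = (qPoch p p r)⁻¹ * (qPoch p p N)⁻¹ * capBin p (N + r) s := by
    simp only [capBin]; ring
  rw [e2, ← this, Finset.mul_sum]
  apply Finset.sum_congr rfl
  intro k _
  simp only [capBin, add_zero]
  rw [show (N : ℤ) - (s - k) = N - s + k by ring]
  field_simp

/-- the weight in the three-fold product expansion -/
noncomputable def capW (q : ℂ) (x y z : ℤ) : ℂ :=
  q ^ (x ^ 2 + y ^ 2 + z ^ 2 - x * y - y * z - z * x + z - x) *
    qPochInvZ (q ^ 3) x * qPochInvZ (q ^ 3) y * qPochInvZ (q ^ 3) z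

noncomputable def capC (q : ℂ) (S : Finset ℤ) (m : ℤ) : ℂ :=
  ∑ x ∈ S, ∑ y ∈ S, ∑ z ∈ S, if x + y + z = m then capW q x y z else 0

theorem cap_rot (S : Finset ℤ) (f : ℤ → ℤ → ℤ → ℂ) :
    ∑ x ∈ S, ∑ y ∈ S, ∑ z ∈ S, f x y z = ∑ x ∈ S, ∑ y ∈ S, ∑ z ∈ S, f y z x := by
  symm
  rw [Finset.sum_comm]
  apply Finset.sum_congr rfl
  intro y _
  rw [Finset.sum_comm]

theorem capC_rec (q : ℂ) (hq : q ≠ 0) (h : ∀ k : ℕ, 0 < k → q ^ k ≠ 1) (M : ℕ) (m : ℤ)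
    (hm : m ≤ M) :
    (1 - q ^ m) * capC q (Finset.Icc 0 (M : ℤ)) m = capC q (Finset.Icc 0 (M : ℤ)) (m - 1) := by
  have h3 : ∀ k : ℕ, 0 < k → (q ^ 3) ^ k ≠ 1 := by
    intro k hk; rw [← pow_mul]; exact h _ (by omega)
  have e1 : q ^ m * capC q (Finset.Icc 0 (M : ℤ)) m =
      ∑ x ∈ Finset.Icc 0 (M : ℤ), ∑ y ∈ Finset.Icc 0 (M : ℤ), ∑ z ∈ Finset.Icc 0 (M : ℤ),
        if x + y + z = m then (q ^ 3) ^ x * capW q x y z else 0 := by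
    rw [capC, cap_rot]
    simp only [Finset.mul_sum]
    refine Finset.sum_congr rfl fun x _ => Finset.sum_congr rfl fun y _ =>
      Finset.sum_congr rfl fun z _ => ?_
    by_cases hs : x + y + z = m
    · rw [if_pos (by omega), if_pos hs]
      simp only [capW]
      rw [show (q ^ 3) ^ x = q ^ (3 * x) by rw [zpow_mul]; norm_cast]
      subst hs
      have : q ^ (x + y + z) * q ^ (y ^ 2 + z ^ 2 + x ^ 2 - y * z - z * x - x * y + x - y) =
        q ^ (3 * x) * q ^ (x ^ 2 + y ^ 2 + z ^ 2 - x * y - y * z - z * x + z - x) := by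
        rw [← zpow_add₀ hq, ← zpow_add₀ hq]; congr 1; ring
      linear_combination (qPochInvZ (q ^ 3) x * qPochInvZ (q ^ 3) y * qPochInvZ (q ^ 3) z) * this
    · rw [if_neg (by omega), if_neg hs]; simp
  rw [sub_mul, one_mul, e1]
  conv_rhs => rw [capC, cap_rot]
  rw [capC, ← Finset.sum_sub_distrib]
  simp only [← Finset.sum_sub_distrib]
  have hL : ∀ f : ℤ → ℤ → ℤ → ℂ, ∑ x ∈ Finset.Icc 0 (M : ℤ), ∑ y ∈ Finset.Icc 0 (M : ℤ),
      ∑ z ∈ Finset.Icc 0 (M : ℤ), f x y z = ∑ y ∈ Finset.Icc 0 (M : ℤ), ∑ z ∈ Finset.Icc 0 (M : ℤ),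
      ∑ x ∈ Finset.Icc 0 (M : ℤ), f x y z := by
    intro f
    rw [Finset.sum_comm]
    refine Finset.sum_congr rfl fun y _ => ?_
    rw [Finset.sum_comm]
  conv_lhs => rw [hL]
  conv_rhs => rw [hL]
  refine Finset.sum_congr rfl fun y hy => Finset.sum_congr rfl fun z hz => ?_
  rw [Finset.mem_Icc] at hy hz
  apply cap_reindex (Equiv.addRight 1)
  · intro x
    have he : (Equiv.addRight (1 : ℤ)) x = x + 1 := rfl
    rw [he]
    by_cases hs : x + 1 + y + z = m
    · rw [if_pos hs, if_pos hs, if_pos (by omega)]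
      simp only [capW]
      have := cap_inv_rec (q ^ 3) h3 (x + 1)
      rw [add_sub_cancel_right] at this
      rw [this]
      rw [show (x+1) ^ 2 + y ^ 2 + z ^ 2 - (x+1) * y - y * z - z * (x+1) + z - (x+1) =
        y ^ 2 + z ^ 2 + x ^ 2 - y * z - z * x - x * y + x - y by ring]
      ring
    · rw [if_neg hs, if_neg hs, if_neg (by omega)]; simp
  · intro x hx
    by_cases hs : x + y + z = m
    · rw [Finset.mem_Icc]
      refine ⟨?_, by omega⟩
      by_contra hc
      apply hx
      simp [capW, cap_inv_neg (q ^ 3) x (by omega)]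
    · rw [if_neg hs, if_neg hs] at hx; simp at hx
  · intro x hx
    by_cases hs : y + z + x = m - 1
    · rw [Finset.mem_Icc]
      refine ⟨?_, by omega⟩
      by_contra hc
      apply hx
      simp [capW, cap_inv_neg (q ^ 3) x (by omega)]
    · rw [if_neg hs] at hx; simp at hx

theorem capC_eq (q : ℂ) (hq : q ≠ 0) (h : ∀ k : ℕ, 0 < k → q ^ k ≠ 1) (M : ℕ) (m : ℕ)
    (hm : m ≤ M) : capC q (Finset.Icc 0 (M : ℤ)) m = qPochInvZ q m := by
  induction m with
  | zero =>
    rw [capC, Finset.sum_eq_single 0, Finset.sum_eq_single 0, Finset.sum_eq_single 0]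
    · simp [capW, cap_inv_zero]
    · intro z _ hz
      rw [if_neg (by push_cast; omega)]
    · simp
    · intro y hy hy0
      rw [Finset.mem_Icc] at hy
      refine Finset.sum_eq_zero fun z hz => ?_
      rw [Finset.mem_Icc] at hz
      rw [if_neg (by push_cast; omega)]
    · simp
    · intro x hx hx0
      rw [Finset.mem_Icc] at hx
      refine Finset.sum_eq_zero fun y hy => Finset.sum_eq_zero fun z hz => ?_
      rw [Finset.mem_Icc] at hy hz
      rw [if_neg (by push_cast; omega)]
    · simp
  | succ m ih =>
    have h1 := capC_rec q hq h M (m + 1 : ℕ) (by exact_mod_cast hm)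
    have h2 := cap_inv_rec q h (m + 1 : ℕ)
    have e : ((m + 1 : ℕ) : ℤ) - 1 = m := by push_cast; ring
    rw [e] at h1 h2
    rw [ih (by omega), h2] at h1
    refine mul_left_cancel₀ ?_ h1
    rw [zpow_natCast]
    exact sub_ne_zero.mpr (Ne.symm (h _ (by omega)))

theorem cap_pos (p : ℂ) (k : ℤ) (h : qPochInvZ p k ≠ 0) : 0 ≤ k := by
  by_contra hc
  exact h (cap_inv_neg p k (by omega))

theorem cap_zpow3 (q : ℂ) (x : ℤ) : (q ^ 3) ^ x = q ^ (3 * x) := by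
  rw [zpow_mul]; norm_cast

/-- summand after the three-fold expansion -/
noncomputable def capG (q : ℂ) (M : ℕ) (x y z n : ℤ) : ℂ :=
  q ^ (2 * (x + y + z) ^ 2 + 6 * (x + y + z) * n + 6 * n ^ 2) * capW q x y z *
    qPochInvZ (q ^ 3) n * qPochInvZ (q ^ 3) (M - 2 * n - (x + y + z))

theorem capG_supp (q : ℂ) (M : ℕ) (x y z n : ℤ) (h : capG q M x y z n ≠ 0) :
    0 ≤ x ∧ 0 ≤ y ∧ 0 ≤ z ∧ 0 ≤ n ∧ 2 * n + x + y + z ≤ M := by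
  simp only [capG, capW, mul_ne_zero_iff] at h
  obtain ⟨⟨⟨-, ⟨⟨-, h1⟩, h2⟩, h3⟩, h4⟩, h5⟩ := h
  have := cap_pos _ _ h1
  have := cap_pos _ _ h2
  have := cap_pos _ _ h3
  have := cap_pos _ _ h4
  have := cap_pos _ _ h5
  omega

theorem cap_step1 (q : ℂ) (hq : q ≠ 0) (h : ∀ k : ℕ, 0 < k → q ^ k ≠ 1) (M : ℕ) :
    ∑ m ∈ Finset.Icc 0 (M : ℤ), ∑ n ∈ Finset.Icc 0 (M : ℤ),
      q ^ (2 * m ^ 2 + 6 * m * n + 6 * n ^ 2) * qPochInvZ q m * qPochInvZ (q ^ 3) n *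
        qPochInvZ (q ^ 3) (M - 2 * n - m) =
    ∑ y ∈ Finset.Icc 0 (M : ℤ), ∑ n ∈ Finset.Icc 0 (M : ℤ), ∑ x ∈ Finset.Icc 0 (M : ℤ),
      ∑ z ∈ Finset.Icc 0 (M : ℤ), capG q M x y z n := by
  set S := Finset.Icc 0 (M : ℤ) with hS
  have e1 : ∀ m ∈ S, ∑ n ∈ S, q ^ (2 * m ^ 2 + 6 * m * n + 6 * n ^ 2) * qPochInvZ q m *
      qPochInvZ (q ^ 3) n * qPochInvZ (q ^ 3) (M - 2 * n - m) =
      ∑ y ∈ S, ∑ n ∈ S, ∑ x ∈ S, ∑ z ∈ S, if x + y + z = m then capG q M x y z n else 0 := by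
    intro m hm
    rw [Finset.sum_comm]
    refine Finset.sum_congr rfl fun n _ => ?_
    rw [Finset.sum_comm]
    have : qPochInvZ q m = capC q S m := by
      rw [hS, Finset.mem_Icc] at hm
      obtain ⟨h0, h1⟩ := hm
      lift m to ℕ using h0
      exact (capC_eq q hq h M m (by exact_mod_cast h1)).symm
    rw [this, capC, Finset.mul_sum, Finset.sum_mul, Finset.sum_mul]
    refine Finset.sum_congr rfl fun x _ => ?_
    rw [Finset.mul_sum, Finset.sum_mul, Finset.sum_mul]
    refine Finset.sum_congr rfl fun y _ => ?_
    rw [Finset.mul_sum, Finset.sum_mul, Finset.sum_mul]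
    refine Finset.sum_congr rfl fun z _ => ?_
    split_ifs with hs
    · subst hs; rfl
    · simp
  rw [Finset.sum_congr rfl e1, Finset.sum_comm]
  refine Finset.sum_congr rfl fun y _ => ?_
  rw [Finset.sum_comm]
  refine Finset.sum_congr rfl fun n _ => ?_
  rw [Finset.sum_comm]
  refine Finset.sum_congr rfl fun x _ => ?_
  rw [Finset.sum_comm]
  refine Finset.sum_congr rfl fun z _ => ?_
  rw [Finset.sum_ite_eq]
  split_ifs with hs
  · rfl
  · by_contra hc
    have := capG_supp q M x y z n (Ne.symm hc)
    apply hs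
    rw [hS, Finset.mem_Icc]
    omega

theorem cap_step2 (q : ℂ) (hq : q ≠ 0) (h3 : ∀ k : ℕ, 0 < k → (q ^ 3) ^ k ≠ 1) (M : ℕ) (y : ℤ)
    (hy : 0 ≤ y) :
    ∑ n ∈ Finset.Icc 0 (M : ℤ), ∑ x ∈ Finset.Icc 0 (M : ℤ), ∑ z ∈ Finset.Icc 0 (M : ℤ),
      capG q M x y z n =
    ∑ b ∈ Finset.Icc 0 (M : ℤ), ∑ a ∈ Finset.Icc 0 (M : ℤ),
      q ^ (3 * (a ^ 2 + b ^ 2 + y ^ 2 + a * y + b * y) + a - b) * qPochInvZ (q ^ 3) a *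
        qPochInvZ (q ^ 3) b * qPochInvZ (q ^ 3) y * qPochInvZ (q ^ 3) (M - a - b - y) := by
  have hz : ∀ n ∈ Finset.Icc 0 (M : ℤ), ∀ x, ∑ z ∈ Finset.Icc 0 (M : ℤ), capG q M x y z n =
      ∑ a ∈ Finset.Icc 0 (M : ℤ), capG q M x y (a - n) n := by
    intro n hn x
    apply cap_reindex (Equiv.subRight n)
    · intro k; rfl
    · intro k hk
      have := capG_supp _ _ _ _ _ _ hk
      rw [Finset.mem_Icc]; omega
    · intro k hk
      have := capG_supp _ _ _ _ _ _ hk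
      rw [Finset.mem_Icc]; omega
  have hx : ∀ n ∈ Finset.Icc 0 (M : ℤ), ∀ a, ∑ x ∈ Finset.Icc 0 (M : ℤ), capG q M x y (a - n) n =
      ∑ b ∈ Finset.Icc 0 (M : ℤ), capG q M (b - n) y (a - n) n := by
    intro n hn a
    apply cap_reindex (Equiv.subRight n)
    · intro k; rfl
    · intro k hk
      have := capG_supp _ _ _ _ _ _ hk
      rw [Finset.mem_Icc]; omega
    · intro k hk
      have := capG_supp _ _ _ _ _ _ hk
      rw [Finset.mem_Icc]; omega
  have e1 : ∀ n ∈ Finset.Icc 0 (M : ℤ), ∑ x ∈ Finset.Icc 0 (M : ℤ), ∑ z ∈ Finset.Icc 0 (M : ℤ),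
      capG q M x y z n = ∑ b ∈ Finset.Icc 0 (M : ℤ), ∑ a ∈ Finset.Icc 0 (M : ℤ),
      capG q M (b - n) y (a - n) n := by
    intro n hn
    rw [Finset.sum_congr rfl fun x _ => hz n hn x, Finset.sum_comm,
      Finset.sum_congr rfl fun a _ => hx n hn a, Finset.sum_comm]
  rw [Finset.sum_congr rfl e1, Finset.sum_comm]
  refine Finset.sum_congr rfl fun b _ => ?_
  rw [Finset.sum_comm]
  refine Finset.sum_congr rfl fun a ha => ?_
  have hV := cap_V (q ^ 3) (pow_ne_zero 3 hq) h3 M a b ha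
  rw [mul_assoc (q ^ _), ← hV, Finset.mul_sum, Finset.sum_mul, Finset.sum_mul]
  refine Finset.sum_congr rfl fun n _ => ?_
  simp only [capG, capW, cap_zpow3]
  rw [show (M : ℤ) - 2 * n - (b - n + y + (a - n)) = M - a - b - y by ring]
  have : q ^ (2 * (b - n + y + (a - n)) ^ 2 + 6 * (b - n + y + (a - n)) * n + 6 * n ^ 2) *
      q ^ ((b - n) ^ 2 + y ^ 2 + (a - n) ^ 2 - (b - n) * y - y * (a - n) - (a - n) * (b - n) +
        (a - n) - (b - n)) = q ^ (3 * (a ^ 2 + b ^ 2 + y ^ 2 + a * y + b * y) + a - b) *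
      q ^ (3 * ((a - n) * (b - n))) := by
    rw [← zpow_add₀ hq, ← zpow_add₀ hq]; congr 1; ring
  linear_combination (qPochInvZ (q ^ 3) (b - n) * qPochInvZ (q ^ 3) y * qPochInvZ (q ^ 3) (a - n) *
    qPochInvZ (q ^ 3) n * qPochInvZ (q ^ 3) (M - a - b - y)) * this

noncomputable def capH (q : ℂ) (M : ℕ) (y a b : ℤ) : ℂ :=
  q ^ (3 * (a ^ 2 + b ^ 2 + y ^ 2 + a * y + b * y) + a - b) * qPochInvZ (q ^ 3) a *
        qPochInvZ (q ^ 3) b * qPochInvZ (q ^ 3) y * qPochInvZ (q ^ 3) (M - a - b - y)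

theorem capH_supp (q : ℂ) (M : ℕ) (y a b : ℤ) (h : capH q M y a b ≠ 0) :
    0 ≤ y ∧ 0 ≤ a ∧ 0 ≤ b ∧ a + b + y ≤ M := by
  simp only [capH, mul_ne_zero_iff] at h
  obtain ⟨⟨⟨⟨-, h1⟩, h2⟩, h3⟩, h4⟩ := h
  have := cap_pos _ _ h1
  have := cap_pos _ _ h2
  have := cap_pos _ _ h3
  have := cap_pos _ _ h4
  omega

theorem cap_step3 (q : ℂ) (hq : q ≠ 0) (h3 : ∀ k : ℕ, 0 < k → (q ^ 3) ^ k ≠ 1) (M : ℕ) :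
    ∑ y ∈ Finset.Icc 0 (M : ℤ), ∑ b ∈ Finset.Icc 0 (M : ℤ), ∑ a ∈ Finset.Icc 0 (M : ℤ),
      capH q M y a b =
    ∑ s ∈ Finset.Icc 0 (M : ℤ), ∑ r ∈ Finset.Icc 0 (M : ℤ),
      q ^ (3 * (r ^ 2 + s ^ 2 - r * s) + r - s) * (qPoch (q ^ 3) (q ^ 3) M *
        qPochInvZ (q ^ 3) r * qPochInvZ (q ^ 3) s * qPochInvZ (q ^ 3) (M - r) *
        qPochInvZ (q ^ 3) (M - s)) := by
  have hz : ∀ y b, ∑ a ∈ Finset.Icc 0 (M : ℤ), capH q M y a b =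
      ∑ r ∈ Finset.Icc 0 (M : ℤ), capH q M y (r - y) b := by
    intro y b
    apply cap_reindex (Equiv.subRight y)
    · intro k; rfl
    · intro k hk
      have := capH_supp _ _ _ _ _ hk
      rw [Finset.mem_Icc]; omega
    · intro k hk
      have := capH_supp _ _ _ _ _ hk
      rw [Finset.mem_Icc]; omega
  have hx : ∀ y r, ∑ b ∈ Finset.Icc 0 (M : ℤ), capH q M y (r - y) b =
      ∑ s ∈ Finset.Icc 0 (M : ℤ), capH q M y (r - y) (s - y) := by
    intro y r
    apply cap_reindex (Equiv.subRight y)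
    · intro k; rfl
    · intro k hk
      have := capH_supp _ _ _ _ _ hk
      rw [Finset.mem_Icc]; omega
    · intro k hk
      have := capH_supp _ _ _ _ _ hk
      rw [Finset.mem_Icc]; omega
  have e1 : ∀ y ∈ Finset.Icc 0 (M : ℤ), ∑ b ∈ Finset.Icc 0 (M : ℤ), ∑ a ∈ Finset.Icc 0 (M : ℤ),
      capH q M y a b = ∑ s ∈ Finset.Icc 0 (M : ℤ), ∑ r ∈ Finset.Icc 0 (M : ℤ),
      capH q M y (r - y) (s - y) := by
    intro y _
    rw [Finset.sum_congr rfl fun b _ => hz y b, Finset.sum_comm,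
      Finset.sum_congr rfl fun r _ => hx y r, Finset.sum_comm]
  rw [Finset.sum_congr rfl e1, Finset.sum_comm]
  refine Finset.sum_congr rfl fun s _ => ?_
  rw [Finset.sum_comm]
  refine Finset.sum_congr rfl fun r hr => ?_
  rw [← cap_W (q ^ 3) (pow_ne_zero 3 hq) h3 M M r s hr le_rfl, Finset.mul_sum]
  refine Finset.sum_congr rfl fun y _ => ?_
  simp only [capH, cap_zpow3]
  rw [show (M : ℤ) - (r - y) - (s - y) - y = M - r - s + y by ring]
  have : q ^ (3 * ((r - y) ^ 2 + (s - y) ^ 2 + y ^ 2 + (r - y) * y + (s - y) * y) + (r - y) - (s - y))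
      = q ^ (3 * (r ^ 2 + s ^ 2 - r * s) + r - s) * q ^ (3 * ((r - y) * (s - y))) := by
    rw [← zpow_add₀ hq]; congr 1; ring
  rw [this]
  ring

theorem cap_step4 (q : ℂ) (hq : q ≠ 0) (h3 : ∀ k : ℕ, 0 < k → (q ^ 3) ^ k ≠ 1) (M : ℕ) :
    ∑ s ∈ Finset.Icc 0 (M : ℤ), ∑ r ∈ Finset.Icc 0 (M : ℤ),
      q ^ (3 * (r ^ 2 + s ^ 2 - r * s) + r - s) * (qPoch (q ^ 3) (q ^ 3) M *
        qPochInvZ (q ^ 3) r * qPochInvZ (q ^ 3) s * qPochInvZ (q ^ 3) (M - r) *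
        qPochInvZ (q ^ 3) (M - s)) =
    ∑ j ∈ Finset.Icc (-(M : ℤ)) M, q ^ (3 * j ^ 2 + j) * (qPoch (q ^ 3) (q ^ 3) M)⁻¹ *
      (qPoch (q ^ 3) (q ^ 3) (2 * M) * qPochInvZ (q ^ 3) (M + j) * qPochInvZ (q ^ 3) (M - j)) := by
  have e1 : ∀ s ∈ Finset.Icc 0 (M : ℤ), ∑ r ∈ Finset.Icc 0 (M : ℤ),
      q ^ (3 * (r ^ 2 + s ^ 2 - r * s) + r - s) * (qPoch (q ^ 3) (q ^ 3) M *
        qPochInvZ (q ^ 3) r * qPochInvZ (q ^ 3) s * qPochInvZ (q ^ 3) (M - r) *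
        qPochInvZ (q ^ 3) (M - s)) = ∑ j ∈ Finset.Icc (-(M : ℤ)) M,
      q ^ (3 * ((s + j) ^ 2 + s ^ 2 - (s + j) * s) + (s + j) - s) * (qPoch (q ^ 3) (q ^ 3) M *
        qPochInvZ (q ^ 3) (s + j) * qPochInvZ (q ^ 3) s * qPochInvZ (q ^ 3) (M - (s + j)) *
        qPochInvZ (q ^ 3) (M - s)) := by
    intro s hs
    rw [Finset.mem_Icc] at hs
    apply cap_reindex (Equiv.addLeft s)
    · intro k; rfl
    · intro k hk
      simp only [mul_ne_zero_iff] at hk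
      have := cap_pos _ _ hk.2.1.1.1.2
      have := cap_pos _ _ hk.2.1.2
      rw [Finset.mem_Icc]; omega
    · intro k hk
      simp only [mul_ne_zero_iff] at hk
      have := cap_pos _ _ hk.2.1.1.1.2
      have := cap_pos _ _ hk.2.1.2
      rw [Finset.mem_Icc]; omega
  rw [Finset.sum_congr rfl e1, Finset.sum_comm]
  refine Finset.sum_congr rfl fun j _ => ?_
  have hW := cap_W (q ^ 3) (pow_ne_zero 3 hq) h3 M (2 * M) M (M + j) (by simp) (by omega)
  have hM := cap_poch_ne (q ^ 3) h3 M
  have e2 : q ^ (3 * j ^ 2 + j) * (qPoch (q ^ 3) (q ^ 3) M)⁻¹ *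
      (qPoch (q ^ 3) (q ^ 3) (2 * M) * qPochInvZ (q ^ 3) (M + j) * qPochInvZ (q ^ 3) (M - j)) =
      q ^ (3 * j ^ 2 + j) * qPoch (q ^ 3) (q ^ 3) M * (qPoch (q ^ 3) (q ^ 3) (2 * M) *
      qPochInvZ (q ^ 3) M * qPochInvZ (q ^ 3) (M + j) * qPochInvZ (q ^ 3) ((2 * M : ℕ) - M) *
      qPochInvZ (q ^ 3) ((2 * M : ℕ) - (M + j))) := by
    rw [show ((2 * M : ℕ) : ℤ) - M = M by push_cast; ring,
      show ((2 * M : ℕ) : ℤ) - (M + j) = M - j by push_cast; ring, cap_inv_nat]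
    field_simp
  rw [e2, ← hW, Finset.mul_sum]
  apply cap_reindex (Equiv.subLeft (M : ℤ))
  · intro k
    have he : (Equiv.subLeft (M : ℤ)) k = M - k := rfl
    rw [he, cap_zpow3, show (M : ℤ) - (M - k + j) = k - j by ring, show (M : ℤ) - (M - k) = k by ring,
      show ((2 * M : ℕ) : ℤ) - M - (M + j) + k = k - j by push_cast; ring,
      show (M : ℤ) - k + j = M + j - k by ring]
    have : q ^ (3 * ((M + j - k) ^ 2 + (M - k) ^ 2 - (M + j - k) * (M - k)) + (M + j - k) - (M - k)) =
        q ^ (3 * j ^ 2 + j) * q ^ (3 * ((M - k) * (M + j - k))) := by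
      rw [← zpow_add₀ hq]; congr 1; ring
    rw [this]
    ring
  · intro k hk
    simp only [mul_ne_zero_iff] at hk
    have := cap_pos _ _ hk.2.1.1.2
    have := cap_pos _ _ hk.2.2
    rw [Finset.mem_Icc]; omega
  · intro k hk
    simp only [mul_ne_zero_iff] at hk
    have := cap_pos _ _ hk.2.1.2
    have := cap_pos _ _ hk.2.1.1.1.2
    rw [Finset.mem_Icc]; omega

theorem cap_range (M : ℕ) (f : ℤ → ℂ) :
    ∑ k ∈ Finset.range (M + 1), f k = ∑ k ∈ Finset.Icc 0 (M : ℤ), f k := by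
  refine Finset.sum_bij' (fun k _ => (k : ℤ)) (fun k _ => k.toNat) ?_ ?_ ?_ ?_ ?_
  · intro k hk; rw [Finset.mem_range] at hk; rw [Finset.mem_Icc]; omega
  · intro k hk; rw [Finset.mem_Icc] at hk; rw [Finset.mem_range]; omega
  · intro k hk; simp
  · intro k hk; rw [Finset.mem_Icc] at hk; simp; omega
  · intro k hk; rfl

theorem finite_capparelli_one (M : ℕ) (q : ℂ) (hq : q ≠ 0) (hroot : ∀ k : ℕ, 0 < k → q ^ k ≠ 1) :
    (∑' m : ℕ, ∑' n : ℕ, q ^ (Qcap m n) * qPoch (q ^ 3) (q ^ 3) M *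
        (qPoch q q m)⁻¹ * (qPoch (q ^ 3) (q ^ 3) n)⁻¹ * qPochInvZ (q ^ 3) ((M : ℤ) - 2 * n - m)) =
    ∑ j ∈ Finset.Icc (-(M : ℤ)) (M : ℤ),
      q ^ (3 * j ^ 2 + j) * qBinom (2 * (M : ℤ)) ((M : ℤ) + j) (q ^ 3) := by
  have h3 : ∀ k : ℕ, 0 < k → (q ^ 3) ^ k ≠ 1 := by
    intro k hk; rw [← pow_mul]; exact hroot _ (by omega)
  have hM := cap_poch_ne (q ^ 3) h3 M
  have key := cap_step1 q hq hroot M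
  rw [Finset.sum_congr rfl fun y hy => cap_step2 q hq h3 M y (Finset.mem_Icc.mp hy).1] at key
  have k3 := cap_step3 q hq h3 M
  simp only [capH] at k3
  rw [k3, cap_step4 q hq h3 M] at key
  have hz : ∀ m n : ℕ, M < 2 * n + m → qPochInvZ (q ^ 3) ((M : ℤ) - 2 * n - m) = 0 := by
    intro m n hmn
    exact cap_inv_neg _ _ (by omega)
  rw [tsum_eq_sum (s := Finset.range (M + 1))]
  swap
  · intro m hm
    rw [Finset.mem_range] at hm
    have : ∀ n : ℕ, q ^ (Qcap m n) * qPoch (q ^ 3) (q ^ 3) M *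
        (qPoch q q m)⁻¹ * (qPoch (q ^ 3) (q ^ 3) n)⁻¹ *
        qPochInvZ (q ^ 3) ((M : ℤ) - 2 * n - m) = 0 := by
      intro n
      rw [hz m n (by omega), mul_zero]
    simp only [this, tsum_zero]
  have e1 : ∀ m ∈ Finset.range (M + 1), (∑' n : ℕ, q ^ (Qcap m n) * qPoch (q ^ 3) (q ^ 3) M *
        (qPoch q q m)⁻¹ * (qPoch (q ^ 3) (q ^ 3) n)⁻¹ *
        qPochInvZ (q ^ 3) ((M : ℤ) - 2 * n - m)) = qPoch (q ^ 3) (q ^ 3) M *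
      (fun m : ℤ => ∑ n ∈ Finset.Icc 0 (M : ℤ),
      q ^ (2 * m ^ 2 + 6 * m * n + 6 * n ^ 2) * qPochInvZ q m * qPochInvZ (q ^ 3) n *
        qPochInvZ (q ^ 3) (M - 2 * n - m)) (m : ℤ) := by
    intro m _
    rw [tsum_eq_sum (s := Finset.range (M + 1))]
    swap
    · intro n hn
      rw [Finset.mem_range] at hn
      rw [hz m n (by omega), mul_zero]
    beta_reduce
    rw [← cap_range, Finset.mul_sum]
    refine Finset.sum_congr rfl fun n _ => ?_
    rw [cap_inv_nat, cap_inv_nat]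
    have : q ^ (2 * (m : ℤ) ^ 2 + 6 * m * n + 6 * (n : ℤ) ^ 2) = q ^ (Qcap m n) := by
      rw [← zpow_natCast]; congr 1
    rw [this]
    ring
  rw [Finset.sum_congr rfl e1, ← Finset.mul_sum, cap_range M (fun m : ℤ => ∑ n ∈ Finset.Icc 0 (M : ℤ),
      q ^ (2 * m ^ 2 + 6 * m * n + 6 * n ^ 2) * qPochInvZ q m * qPochInvZ (q ^ 3) n *
        qPochInvZ (q ^ 3) (M - 2 * n - m)), key, Finset.mul_sum]
  refine Finset.sum_congr rfl fun j hj => ?_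
  rw [Finset.mem_Icc] at hj
  rw [qBinom, if_pos (by omega), qPochInvZ, qPochInvZ, if_pos (by omega), if_pos (by omega)]
  rw [show (2 * (M : ℤ)).toNat = 2 * M by omega, show 2 * (M : ℤ) - (M + j) = M - j by ring]
  field_simp
end

section
/- For every nonnegative integer N and every nonzero complex number q that is not a root of unity, Σ_{m,n≥0} q^{Q(m,n)} [3(N-2n-m) choose m]_q [2(N-2n-m)+n choose n]_{q³} = Σ_{l=0}^{N} q^{3·C(N-2l,2)} [N choose 2l]_{q³} (-q²;q⁶)_l (-q⁴;q⁶)_l, where C(a,2) = a(a-1)/2 denotes the binomial coefficient and a Gaussian binomial with negative top entry is 0. -/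
namespace FC
open PowerSeries Finset

lemma qPoch_succ (a q : ℂ) (n : ℕ) : qPoch a q (n+1) = qPoch a q n * (1 - a * q ^ n) := by
  simp [qPoch, Finset.prod_range_succ]

lemma qPoch_zero (a q : ℂ) : qPoch a q 0 = 1 := by simp [qPoch]

lemma qPoch_ne (q : ℂ) (h : ∀ k : ℕ, 0 < k → q ^ k ≠ 1) (n : ℕ) : qPoch q q n ≠ 0 := by
  unfold qPoch
  rw [Finset.prod_ne_zero_iff]
  intro j _ h0
  apply h (j+1) (by omega)
  rw [pow_succ']
  linear_combination -h0

/-- natural-index version of the Gaussian binomial -/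
noncomputable def gb (q : ℂ) (n k : ℕ) : ℂ :=
  if k ≤ n then qPoch q q n * (qPoch q q k)⁻¹ * (qPoch q q (n - k))⁻¹ else 0

lemma qBinom_eq (q : ℂ) (n k : ℕ) (a b : ℤ) (ha : a = n) (hb : b = k) : qBinom a b q = gb q n k := by
  subst ha hb
  unfold qBinom gb
  by_cases h : k ≤ n
  · have : ((n:ℤ) - (k:ℤ)).toNat = n - k := by omega
    simp [h]
  · simp [h]

lemma gb_zero (q : ℂ) (h : ∀ k : ℕ, 0 < k → q ^ k ≠ 1) (n : ℕ) : gb q n 0 = 1 := by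
  have := qPoch_ne q h n
  simp [gb, qPoch_zero, this]

lemma gb_self (q : ℂ) (h : ∀ k : ℕ, 0 < k → q ^ k ≠ 1) (n : ℕ) : gb q n n = 1 := by
  have := qPoch_ne q h n
  simp [gb, qPoch_zero, this]

lemma gb_lt (q : ℂ) (n k : ℕ) (hk : n < k) : gb q n k = 0 := by
  simp [gb, hk]

lemma gb_pascal (q : ℂ) (h : ∀ k : ℕ, 0 < k → q ^ k ≠ 1) (k d : ℕ) :
    gb q (k+d+1) (k+1) = gb q (k+d) (k+1) + q ^ d * gb q (k+d) k := by
  rcases d with _ | d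
  · simp [gb_self q h, gb_lt]
  · have e1 : k + (d+1) + 1 - (k+1) = d+1 := by omega
    have e2 : k + (d+1) - (k+1) = d := by omega
    have e3 : k + (d+1) - k = d+1 := by omega
    have l1 : k + 1 ≤ k + (d+1) + 1 := by omega
    have l2 : k + 1 ≤ k + (d+1) := by omega
    have l3 : k ≤ k + (d+1) := by omega
    simp only [gb, e1, e2, e3, l1, l2, l3, if_true]
    have n1 := qPoch_ne q h k
    have n2 := qPoch_ne q h d
    have n3 := qPoch_ne q h (k+1)
    have n4 := qPoch_ne q h (d+1)
    rw [qPoch_succ q q (k+(d+1))]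
    rw [qPoch_succ] at n3 n4
    rw [qPoch_succ q q k, qPoch_succ q q d]
    have n5 := right_ne_zero_of_mul n3
    have n6 := right_ne_zero_of_mul n4
    field_simp
    ring

/-- numerator series -/
noncomputable def H (q : ℂ) (L : ℕ) : PowerSeries ℂ :=
  PowerSeries.mk fun m => q ^ (m.choose 2) * gb q L m

lemma choose2 (m : ℕ) : (m+1).choose 2 = m.choose 2 + m := by
  rw [Nat.choose_succ_succ' m 1]; simp; ring

lemma H_succ (q : ℂ) (h : ∀ k : ℕ, 0 < k → q ^ k ≠ 1) (L : ℕ) :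
    H q (L+1) = H q L * (1 + C (q ^ L) * X) := by
  ext m
  rw [mul_add, mul_one, mul_left_comm, map_add, PowerSeries.coeff_C_mul]
  rcases m with _ | m
  · simp [H, gb_zero q h]
  · rw [PowerSeries.coeff_succ_mul_X]
    simp only [H, PowerSeries.coeff_mk, choose2]
    by_cases hm : m ≤ L
    · obtain ⟨d, rfl⟩ := Nat.exists_eq_add_of_le hm
      rw [gb_pascal q h]
      ring
    · rw [gb_lt _ _ _ (by omega), gb_lt _ _ _ (by omega), gb_lt _ _ _ (by omega)]; simp

/-- denominator series; `p` base, `r` scaling -/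
noncomputable def D (p r : ℂ) (L : ℕ) : PowerSeries ℂ :=
  PowerSeries.mk fun j => if Even j then r ^ (j/2) * gb p (L + j/2) (j/2) else 0

lemma D_succ (p r : ℂ) (h : ∀ k : ℕ, 0 < k → p ^ k ≠ 1) (L : ℕ) :
    D p r (L+1) * (1 - C (r * p ^ (L+1)) * X ^ 2) = D p r L := by
  ext m
  rw [mul_sub, mul_one, mul_left_comm, map_sub, PowerSeries.coeff_C_mul]
  rcases m with _ | _ | m
  · simp [D, gb_zero p h, PowerSeries.coeff_mul_X_pow']
  · simp [D, PowerSeries.coeff_mul_X_pow']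
  · rw [show m + 1 + 1 = m + 2 from rfl, PowerSeries.coeff_mul_X_pow]
    simp only [D, PowerSeries.coeff_mk]
    by_cases hm : Even m
    · obtain ⟨n, rfl⟩ := hm
      have e1 : (n + n + 2) / 2 = n + 1 := by omega
      have e2 : (n + n) / 2 = n := by omega
      have h1 : Even (n + n + 2) := ⟨n+1, by ring⟩
      have h2 : Even (n + n) := ⟨n, by ring⟩
      simp only [h1, h2, if_true, e1, e2]
      have := gb_pascal p h n (L+1)
      rw [show L + 1 + (n+1) = n + (L+1) + 1 by ring, show L + 1 + n = n + (L+1) by ring,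
        show L + (n+1) = n + (L+1) by ring, this]
      ring
    · have h1 : ¬ Even (m+2) := by
        intro h; apply hm; exact (Nat.even_add.mp h).mpr (by decide)
      simp [hm, h1]

noncomputable def G (q : ℂ) (M : ℕ) : PowerSeries ℂ := H q (3*M) * D (q^3) q⁻¹ (2*M)

lemma root3 {q : ℂ} (h : ∀ k : ℕ, 0 < k → q ^ k ≠ 1) : ∀ k : ℕ, 0 < k → (q^3) ^ k ≠ 1 := by
  intro k hk
  rw [← pow_mul]
  exact h _ (by omega)

lemma G_succ (q : ℂ) (hq : q ≠ 0) (h : ∀ k : ℕ, 0 < k → q ^ k ≠ 1) (M : ℕ) :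
    G q (M+1) * ((1 - C (q ^ (3*M+1)) * X) * (1 - C (q ^ (6*M+5)) * X ^ 2)) =
    G q M * ((1 + C (q ^ (3*M)) * X) * (1 + C (q ^ (3*M+2)) * X)) := by
  have hne : (1 + C (q ^ (3*M+1)) * X : PowerSeries ℂ) ≠ 0 := by
    intro h0
    have := congrArg (PowerSeries.coeff 0) h0
    simp at this
  apply mul_right_cancel₀ hne
  have a1 := H_succ q h (3*M)
  have a2 := H_succ q h (3*M+1)
  have a3 := H_succ q h (3*M+2)
  have b1 := D_succ (q^3) q⁻¹ (root3 h) (2*M)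
  have b2 := D_succ (q^3) q⁻¹ (root3 h) (2*M+1)
  have c1 : q⁻¹ * (q^3)^(2*M+1) = q^(3*M+1) * q^(3*M+1) := by
    field_simp
    ring
  have c2 : q⁻¹ * (q^3)^(2*M+1+1) = q^(6*M+5) := by
    field_simp
    ring
  rw [c1, map_mul] at b1
  rw [c2] at b2
  unfold G
  rw [show 3*(M+1) = 3*M+2+1 by ring, show 2*(M+1) = 2*M+1+1 by ring, a3, a2, a1, ← b1, ← b2]
  ring

noncomputable def ex (k : ℕ) : ℕ := k^2 + (k+1).choose 2

lemma ex_succ (k : ℕ) : ex (k+1) = ex k + 3*k+2 := by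
  unfold ex
  rw [choose2 (k+1)]; ring

noncomputable def v (q : ℂ) (M N : ℕ) : ℂ :=
  if M ≤ N then q ^ ex (N - M) * PowerSeries.coeff (N - M) (G q M) else 0

lemma v_add (q : ℂ) (M k N : ℕ) (h : N = M + k) : v q M N = q ^ ex k * PowerSeries.coeff k (G q M) := by
  subst h; simp [v]

lemma v_lt (q : ℂ) (M N : ℕ) (h : N < M) : v q M N = 0 := by
  simp [v, h]

lemma G_coeff (q : ℂ) (hq : q ≠ 0) (h : ∀ k : ℕ, 0 < k → q ^ k ≠ 1) (M : ℕ) :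
    G q (M+1) - C (q^(3*M+1)) * (G q (M+1) * X) - C (q^(6*M+5)) * (G q (M+1) * X^2)
      + C (q^(9*M+6)) * (G q (M+1) * X^3) =
    G q M + C (q^(3*M) + q^(3*M+2)) * (G q M * X) + C (q^(6*M+2)) * (G q M * X^2) := by
  have := G_succ q hq h M
  have e1 : q^(9*M+6) = q^(3*M+1) * q^(6*M+5) := by ring
  have e2 : q^(6*M+2) = q^(3*M) * q^(3*M+2) := by ring
  rw [e1, e2, map_mul, map_mul, map_add]
  linear_combination this

lemma v_rec (q : ℂ) (hq : q ≠ 0) (h : ∀ k : ℕ, 0 < k → q ^ k ≠ 1) (M N : ℕ) :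
    v q (M+1) (N+3) - q^(3*N+6) * v q (M+1) (N+2) - q^(6*N+12) * v q (M+1) (N+1)
      + q^(9*N+12) * v q (M+1) N =
    v q M (N+2) + (q^(3*N+5) + q^(3*N+7)) * v q M (N+1) + q^(6*N+9) * v q M N := by
  by_cases h0 : N + 2 < M
  · rw [v_lt _ _ _ (by omega), v_lt _ _ _ (by omega), v_lt _ _ _ (by omega), v_lt _ _ _ (by omega),
      v_lt _ _ _ (by omega), v_lt _ _ _ (by omega), v_lt _ _ _ (by omega)]
    simp
  obtain ⟨k, hk⟩ := Nat.exists_eq_add_of_le (not_lt.mp h0)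
  have key := congrArg (PowerSeries.coeff k) (G_coeff q hq h M)
  simp only [LinearMap.map_add, LinearMap.map_sub, PowerSeries.coeff_C_mul] at key
  rcases k with _ | _ | _ | k
  · rw [v_add q (M+1) 0 (N+3) (by omega), v_lt _ _ (N+2) (by omega), v_lt _ _ (N+1) (by omega),
      v_lt _ _ N (by omega), v_add q M 0 (N+2) (by omega), v_lt _ _ (N+1) (by omega),
      v_lt _ _ N (by omega)]
    simp [PowerSeries.coeff_mul_X_pow'] at key
    simp [key]
  · rw [v_add q (M+1) 1 (N+3) (by omega), v_add _ _ 0 (N+2) (by omega), v_lt _ _ (N+1) (by omega),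
      v_lt _ _ N (by omega), v_add q M 1 (N+2) (by omega), v_add _ _ 0 (N+1) (by omega),
      v_lt _ _ N (by omega)]
    obtain rfl : M = N + 1 := by omega
    simp [PowerSeries.coeff_mul_X_pow', PowerSeries.coeff_succ_mul_X] at key
    simp [ex]
    linear_combination q^2 * key
  · rw [v_add q (M+1) 2 (N+3) (by omega), v_add _ _ 1 (N+2) (by omega), v_add _ _ 0 (N+1) (by omega),
      v_lt _ _ N (by omega), v_add q M 2 (N+2) (by omega), v_add _ _ 1 (N+1) (by omega),
      v_add _ _ 0 N (by omega)]
    obtain rfl : M = N := by omega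
    simp [PowerSeries.coeff_mul_X_pow', PowerSeries.coeff_succ_mul_X] at key
    have e0 : ex 0 = 0 := by simp [ex]
    have e1 : ex 1 = 2 := by simp [ex]
    have e2 : ex 2 = 7 := by simp [ex_succ, e0]
    simp [e0, e1, e2]
    linear_combination q^7 * key
  · rw [v_add q (M+1) (k+3) (N+3) (by omega), v_add _ _ (k+2) (N+2) (by omega),
      v_add _ _ (k+1) (N+1) (by omega),
      v_add _ _ k N (by omega), v_add q M (k+3) (N+2) (by omega), v_add _ _ (k+2) (N+1) (by omega),
      v_add _ _ (k+1) N (by omega)]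
    obtain rfl : N = M + (k + 1) := by omega
    rw [show k+1+1+1 = k+3 from rfl, PowerSeries.coeff_mul_X_pow, PowerSeries.coeff_succ_mul_X,
      show k+3 = (k+1)+2 from rfl, PowerSeries.coeff_mul_X_pow, PowerSeries.coeff_mul_X_pow,
      PowerSeries.coeff_succ_mul_X] at key
    simp only [ex_succ, show k+1+2 = k+3 from rfl, show k+1+1 = k+2 from rfl] at key ⊢
    simp only [show k+3 = k+1+1+1 from rfl, show k+2=k+1+1 from rfl, ex_succ] at key ⊢
    linear_combination q^(ex k + 9*k+15) * key

lemma G0_coeff (q : ℂ) (h : ∀ k : ℕ, 0 < k → q ^ k ≠ 1) (k : ℕ) :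
    PowerSeries.coeff k (G q 0) = if Even k then q⁻¹ ^ (k/2) else 0 := by
  have : H q (3*0) = 1 := by
    ext m
    rcases m with _ | m
    · simp [H, gb_zero q h]
    · simp [H, gb_lt]
  unfold G
  rw [this, one_mul]
  simp [D, gb_self _ (root3 h)]

lemma v0 (q : ℂ) (hq : q ≠ 0) (h : ∀ k : ℕ, 0 < k → q ^ k ≠ 1) (N : ℕ) :
    v q 0 (N+2) = q^(6*N+6) * v q 0 N := by
  rw [v_add q 0 (N+2) _ (by omega), v_add q 0 N _ (by omega), G0_coeff q h, G0_coeff q h]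
  have e : Even (N+2) ↔ Even N := by simp [Nat.even_add]
  have e2 : (N+2)/2 = N/2+1 := by omega
  rw [e2, show N+2=N+1+1 from rfl, ex_succ, ex_succ]
  simp only [show N+1+1 = N+2 from rfl, e]
  split_ifs
  · have hy : q * q⁻¹ = 1 := mul_inv_cancel₀ hq
    linear_combination q ^ 6 * q ^ ex N * q ^ (N * 6) * q⁻¹ ^ (N / 2) * hy
  · simp

noncomputable def LL (q : ℂ) (N : ℕ) : ℂ := ∑ M ∈ range (N+1), v q M N

lemma LL_eq (q : ℂ) (N K : ℕ) (hK : N + 1 ≤ K) : LL q N = ∑ M ∈ range K, v q M N := by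
  unfold LL
  apply Finset.sum_subset
  · intro x; simp; omega
  · intro x _ h2
    apply v_lt
    simp at h2; omega

lemma LL_rec (q : ℂ) (hq : q ≠ 0) (h : ∀ k : ℕ, 0 < k → q ^ k ≠ 1) (N : ℕ) :
    LL q (N+3) = (1 + q^(3*N+6)) * LL q (N+2) + (q^(6*N+12) + q^(3*N+5) + q^(3*N+7)) * LL q (N+1)
      + (q^(6*N+9) - q^(9*N+12)) * LL q N := by
  have hs := Finset.sum_congr (rfl : range (N+5) = range (N+5)) (fun M _ => v_rec q hq h M N)
  simp only [Finset.sum_add_distrib, Finset.sum_sub_distrib, ← Finset.mul_sum] at hs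
  rw [← LL_eq q (N+2) _ (by omega), ← LL_eq q (N+1) _ (by omega), ← LL_eq q N _ (by omega)] at hs
  have f : ∀ K, K ≤ N + 5 → ∑ M ∈ range (N+5), v q (M+1) K = LL q K - v q 0 K := by
    intro K hK
    rw [LL_eq q K (N+5+1) (by omega), Finset.sum_range_succ' _ (N+5)]
    ring
  rw [f _ (by omega), f _ (by omega), f _ (by omega), f _ (by omega)] at hs
  rw [show N+3=N+1+2 from rfl, v0 q hq h (N+1), v0 q hq h N] at hs
  rw [show N+3=N+1+2 from rfl]
  linear_combination hs

lemma G_coeff0 (q : ℂ) (h : ∀ k : ℕ, 0 < k → q ^ k ≠ 1) (M : ℕ) : PowerSeries.coeff 0 (G q M) = 1 := by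
  unfold G
  simp [H, D, gb_zero _ h, gb_zero _ (root3 h), PowerSeries.coeff_mul]

lemma LL0 (q : ℂ) (h : ∀ k : ℕ, 0 < k → q ^ k ≠ 1) : LL q 0 = 1 := by
  simp [LL, v, ex, G_coeff0 q h]

lemma LL1 (q : ℂ) (h : ∀ k : ℕ, 0 < k → q ^ k ≠ 1) : LL q 1 = 1 := by
  have := G_coeff0 q h 1
  simp only [LL, Finset.sum_range_succ, v, ex, G0_coeff q h]
  simp at this ⊢
  exact this

lemma LL2 (q : ℂ) (hq : q ≠ 0) (h : ∀ k : ℕ, 0 < k → q ^ k ≠ 1) : LL q 2 = 1 + q^2+q^3+q^4+q^6 := by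
  have a := G_coeff0 q h 2
  have b0 := G_coeff0 q h 1
  have b1 := congrArg (PowerSeries.coeff 1) (G_coeff q hq h 0)
  simp only [LinearMap.map_add, LinearMap.map_sub, PowerSeries.coeff_C_mul] at b1
  simp [PowerSeries.coeff_mul_X_pow', PowerSeries.coeff_succ_mul_X, G0_coeff q h] at b1
  have c0 := G0_coeff q h 0
  simp at c0 b0 a
  have e0 : ex 0 = 0 := by simp [ex]
  have e1 : ex 1 = 2 := by simp [ex]
  have e2 : ex 2 = 7 := by simp [ex_succ, e0]
  simp [LL, Finset.sum_range_succ, v, e0, e1, e2, G0_coeff q h]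
  rw [b0] at b1
  have : q^7 * q⁻¹ = q^6 := by field_simp
  linear_combination q^2 * b1 + a + this

/-! right-hand side -/

noncomputable def cc (q : ℂ) (l : ℕ) : ℂ := qPoch (-q ^ 2) (q ^ 6) l * qPoch (-q ^ 4) (q ^ 6) l

noncomputable def E (p : ℂ) : PowerSeries ℂ := PowerSeries.mk fun k => p ^ (k.choose 2) * (qPoch p p k)⁻¹

noncomputable def Ph (q : ℂ) : PowerSeries ℂ :=
  PowerSeries.mk fun j => if Even j then cc q (j/2) * (qPoch (q^3) (q^3) j)⁻¹ else 0

lemma E_eq (p : ℂ) (h : ∀ k : ℕ, 0 < k → p ^ k ≠ 1) : E p = (1 + X) * rescale p (E p) := by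
  ext k
  rw [add_mul, one_mul, map_add, PowerSeries.coeff_rescale]
  rcases k with _ | k
  · simp [E]
  · rw [PowerSeries.coeff_succ_X_mul, PowerSeries.coeff_rescale]
    simp only [E, PowerSeries.coeff_mk, choose2]
    have n1 := qPoch_ne p h (k+1)
    rw [qPoch_succ] at n1 ⊢
    have n2 := left_ne_zero_of_mul n1
    have n3 := right_ne_zero_of_mul n1
    field_simp
    ring

lemma Ph_eq (q : ℂ) (h : ∀ k : ℕ, 0 < k → q ^ k ≠ 1) :
    C (q^3) * Ph q - C (q^3+1) * rescale (q^3) (Ph q) + rescale (q^3) (rescale (q^3) (Ph q)) =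
    (C (q^3) * Ph q + C (q^3*(q^2+q^4)) * rescale (q^3) (Ph q)
      + C (q^9) * rescale (q^3) (rescale (q^3) (Ph q))) * X^2 := by
  ext k
  rcases k with _ | _ | k
  · simp only [LinearMap.map_add, LinearMap.map_sub, PowerSeries.coeff_C_mul, PowerSeries.coeff_rescale,
      PowerSeries.coeff_mul_X_pow']
    simp
    ring
  · simp only [LinearMap.map_add, LinearMap.map_sub, PowerSeries.coeff_C_mul, PowerSeries.coeff_rescale,
      PowerSeries.coeff_mul_X_pow']
    simp [Ph]
  · rw [show k+1+1=k+2 from rfl, PowerSeries.coeff_mul_X_pow]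
    simp only [LinearMap.map_add, LinearMap.map_sub, PowerSeries.coeff_C_mul, PowerSeries.coeff_rescale, Ph, PowerSeries.coeff_mk]
    by_cases hm : Even k
    · obtain ⟨n, rfl⟩ := hm
      have e1 : (n + n + 2) / 2 = n + 1 := by omega
      have e2 : (n + n) / 2 = n := by omega
      have h1 : Even (n + n + 2) := ⟨n+1, by ring⟩
      have h2 : Even (n + n) := ⟨n, by ring⟩
      simp only [h1, h2, if_true, e1, e2]
      have n1 := qPoch_ne (q^3) (root3 h) (n+n+2)
      rw [qPoch_succ, qPoch_succ] at n1 ⊢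
      have n2 := left_ne_zero_of_mul n1
      have n3 := right_ne_zero_of_mul n1
      have n4 := left_ne_zero_of_mul n2
      have n5 := right_ne_zero_of_mul n2
      simp only [cc, qPoch_succ]
      field_simp
      ring
    · have h1 : ¬ Even (k+2) := by
        intro h; apply hm; exact (Nat.even_add.mp h).mpr (by decide)
      simp [hm, h1]

noncomputable def A (q : ℂ) : PowerSeries ℂ := E (q^3) * Ph q

lemma A_eq (q : ℂ) (h : ∀ k : ℕ, 0 < k → q ^ k ≠ 1) :
    C (q^3) * A q - C (q^3) * (A q * X) - C (q^3+1) * rescale (q^3) (A q)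
     + rescale (q^3) (rescale (q^3) (A q)) + C (q^3) * (rescale (q^3) (rescale (q^3) (A q)) * X) =
    C (q^3*(q^2+q^4)) * (rescale (q^3) (A q) * X^2)
      + C (q^9) * (rescale (q^3) (rescale (q^3) (A q)) * X^2)
      + C (q^12) * (rescale (q^3) (rescale (q^3) (A q)) * X^3) := by
  have hE := E_eq (q^3) (root3 h)
  have hE1 := congrArg (rescale (q^3)) hE
  have hP := Ph_eq q h
  simp only [map_mul, map_add, map_one, PowerSeries.rescale_X] at hE1
  simp only [A, map_mul (rescale (q^3))]
  generalize rescale (q^3) (rescale (q^3) (E (q^3))) = E2 at *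
  generalize rescale (q^3) (E (q^3)) = E1 at *
  generalize rescale (q^3) (rescale (q^3) (Ph q)) = P2 at *
  generalize rescale (q^3) (Ph q) = P1 at *
  rw [hE]
  have e : (C (q^12) : PowerSeries ℂ) = C (q^9) * C (q^3) := by rw [← map_mul]; ring_nf
  rw [e]
  linear_combination E1 * hP + (C (q^9) * P2 * X^2 - P2) * hE1

noncomputable def RR (q : ℂ) (N : ℕ) : ℂ := qPoch (q^3) (q^3) N * PowerSeries.coeff N (A q)

lemma RR_rec (q : ℂ) (hq : q ≠ 0) (h : ∀ k : ℕ, 0 < k → q ^ k ≠ 1) (N : ℕ) :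
    RR q (N+3) = (1 + q^(3*N+6)) * RR q (N+2) + (q^(6*N+12) + q^(3*N+5) + q^(3*N+7)) * RR q (N+1)
      + (q^(6*N+9) - q^(9*N+12)) * RR q N := by
  have key := congrArg (PowerSeries.coeff (N+3)) (A_eq q h)
  simp only [LinearMap.map_add, LinearMap.map_sub, PowerSeries.coeff_C_mul] at key
  rw [PowerSeries.coeff_mul_X_pow, PowerSeries.coeff_succ_mul_X, PowerSeries.coeff_succ_mul_X,
      show N+3 = (N+1)+2 from rfl, PowerSeries.coeff_mul_X_pow, PowerSeries.coeff_mul_X_pow] at key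
  simp only [PowerSeries.coeff_rescale, show N+1+2 = N+3 from rfl] at key
  unfold RR
  rw [qPoch_succ _ _ (N+2), qPoch_succ _ _ (N+1), qPoch_succ _ _ N]
  have h3 : q^3 ≠ 0 := pow_ne_zero _ hq
  apply mul_left_cancel₀ h3
  linear_combination qPoch (q^3) (q^3) N * (1 - q^3 * (q^3)^N) * key

lemma RR_eq (q : ℂ) (h : ∀ k : ℕ, 0 < k → q ^ k ≠ 1) (N : ℕ) :
    ∑ l ∈ Finset.range (N + 1),
      q ^ (3 * ((((N : ℤ) - 2 * l) * ((N : ℤ) - 2 * l - 1)) / 2)) *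
        qBinom (N : ℤ) (2 * (l : ℤ)) (q ^ 3) * qPoch (-q ^ 2) (q ^ 6) l * qPoch (-q ^ 4) (q ^ 6) l
    = RR q N := by
  unfold RR A
  rw [mul_comm (E _), PowerSeries.coeff_mul, Finset.Nat.sum_antidiagonal_eq_sum_range_succ_mk, Finset.mul_sum]
  have hs : ∀ j ∈ range (N+1), qPoch (q^3) (q^3) N * (PowerSeries.coeff j (Ph q) * PowerSeries.coeff (N-j) (E (q^3)))
     = ∑ l ∈ range (N+1), if j = 2*l then (q^3)^((N-j).choose 2) * gb (q^3) N j * cc q l else 0 := by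
    intro j hj
    have hj : j ≤ N := by simp at hj; omega
    by_cases he : Even j
    · obtain ⟨n, rfl⟩ := he
      rw [Finset.sum_eq_single n]
      · have e2 : (n + n) / 2 = n := by omega
        simp [Ph, E, gb, hj, e2, two_mul]
        ring
      · intro b _ hb
        rw [if_neg (by omega)]
      · intro hn; simp at hn; omega
    · rw [Finset.sum_eq_zero]
      · simp [Ph, he]
      · intro l _
        rw [if_neg]
        rintro rfl
        exact he (even_two_mul l)
  rw [Finset.sum_congr rfl hs, Finset.sum_comm]
  apply Finset.sum_congr rfl
  intro l hl
  rw [Finset.sum_ite_eq', qBinom_eq (q^3) N (2*l) _ _ rfl (by push_cast; rfl)]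
  split_ifs with hh
  · have hh : 2*l ≤ N := by simp at hh; omega
    obtain ⟨d, rfl⟩ := Nat.exists_eq_add_of_le hh
    have e : (((2*l+d : ℕ):ℤ) - 2*l) * (((2*l+d : ℕ):ℤ) - 2*l - 1) / 2 = ((d.choose 2 : ℕ) : ℤ) := by
      have : (((2*l+d : ℕ):ℤ) - 2*l) = d := by push_cast; ring
      rw [this]
      have h2 : ((d:ℤ) * (d-1)) = 2 * (d.choose 2 : ℕ) := by
        clear * -
        induction d with
        | zero => simp
        | succ d ih => rw [choose2]; push_cast at ih ⊢; linarith
      rw [h2]; simp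
    rw [e, show 2*l+d-2*l = d by omega, ← pow_mul]
    rw [show (3 * ((d.choose 2 : ℕ):ℤ)) = ((3 * d.choose 2 : ℕ) : ℤ) by push_cast; ring, zpow_natCast]
    unfold cc
    ring
  · rw [gb_lt _ _ _ (by simp at hh; omega)]; simp

lemma RR012 (q : ℂ) (hq : q ≠ 0) (h : ∀ k : ℕ, 0 < k → q ^ k ≠ 1) :
    RR q 0 = 1 ∧ RR q 1 = 1 ∧ RR q 2 = 1 + q^2+q^3+q^4+q^6 := by
  have n1 := qPoch_ne (q^3) (root3 h) 1
  have n2 := qPoch_ne (q^3) (root3 h) 2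
  refine ⟨?_, ?_, ?_⟩
  · simp [RR, A, E, Ph, PowerSeries.coeff_mul, qPoch_zero, cc]
  · simp [RR, A, E, Ph, PowerSeries.coeff_mul, qPoch_zero, cc, Finset.Nat.antidiagonal_succ, n1]
  · simp [RR, A, E, Ph, PowerSeries.coeff_mul, qPoch_zero, cc, Finset.Nat.antidiagonal_succ]
    have c1 : qPoch (-q^2) (q^6) 1 = 1 + q^2 := by simp [qPoch]
    have c2 : qPoch (-q^4) (q^6) 1 = 1 + q^4 := by simp [qPoch]
    rw [c1, c2]
    field_simp
    ring

lemma LL_eq_RR (q : ℂ) (hq : q ≠ 0) (h : ∀ k : ℕ, 0 < k → q ^ k ≠ 1) (N : ℕ) :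
    LL q N = RR q N ∧ LL q (N+1) = RR q (N+1) ∧ LL q (N+2) = RR q (N+2) := by
  induction N with
  | zero =>
    obtain ⟨a, b, c⟩ := RR012 q hq h
    exact ⟨by rw [a, LL0 q h], by rw [b, LL1 q h], by rw [c, LL2 q hq h]⟩
  | succ N ih =>
    obtain ⟨a, b, c⟩ := ih
    refine ⟨b, c, ?_⟩
    rw [show N+1+2=N+3 from rfl, LL_rec q hq h, RR_rec q hq h, a, b, c]

noncomputable def tm (q : ℂ) (N m n : ℕ) : ℂ := q ^ Qcap m n *
        qBinom (3 * ((N : ℤ) - 2 * n - m)) (m : ℤ) q *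
        qBinom (2 * ((N : ℤ) - 2 * n - m) + n) (n : ℤ) (q ^ 3)

lemma tm_zero (q : ℂ) (N m n : ℕ) (hmn : N < m + 2*n) : tm q N m n = 0 := by
  unfold tm qBinom
  rw [if_neg (by omega)]
  simp

lemma ex_two (k : ℕ) : 2 * ex k = 3*k^2+k := by
  induction k with
  | zero => simp [ex]
  | succ k ih => rw [ex_succ]; linarith

lemma ch_two (k : ℕ) : 2 * k.choose 2 + k = k^2 := by
  induction k with
  | zero => simp
  | succ k ih => rw [choose2]; linarith

lemma Q_ex (m n : ℕ) : ex (m+2*n) + m.choose 2 = Qcap m n + n := by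
  have h1 := ex_two (m+2*n)
  have h2 := ch_two m
  unfold Qcap
  nlinarith

lemma v_sum (q : ℂ) (hq : q ≠ 0) (N M : ℕ) (hM : M ≤ N) :
    v q M N = ∑ m ∈ range (N+1), ∑ n ∈ range (N+1), if M + m + 2*n = N then tm q N m n else 0 := by
  obtain ⟨k, rfl⟩ := Nat.exists_eq_add_of_le hM
  rw [v_add q M k _ rfl, G, PowerSeries.coeff_mul, Finset.Nat.sum_antidiagonal_eq_sum_range_succ_mk, Finset.mul_sum]
  have hsub : range (k+1) ⊆ range (M+k+1) := by intro x; simp; omega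
  rw [← Finset.sum_subset hsub]
  · apply Finset.sum_congr rfl
    intro m hm
    have hm : m ≤ k := by simp at hm; omega
    obtain ⟨j, rfl⟩ := Nat.exists_eq_add_of_le hm
    rw [show m + j - m = j by omega]
    by_cases he : Even j
    · obtain ⟨n, rfl⟩ := he
      rw [Finset.sum_eq_single n]
      · rw [if_pos (by omega)]
        unfold tm
        rw [qBinom_eq q (3*M) m _ _ (by push_cast; ring) rfl,
          qBinom_eq (q^3) (2*M+n) n _ _ (by push_cast; ring) rfl]
        have e2 : (n + n) / 2 = n := by omega
        simp only [H, D, PowerSeries.coeff_mk, e2, show Even (n+n) from ⟨n, rfl⟩, if_true]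
        have hx : q ^ ex (m+(n+n)) * q^(m.choose 2) = q^Qcap m n * q^n := by
          rw [← pow_add, ← pow_add, ← two_mul, Q_ex]
        have hy : q^n * q⁻¹^n = 1 := by rw [← mul_pow, mul_inv_cancel₀ hq, one_pow]
        linear_combination (gb q (3*M) m * q⁻¹^n * gb (q^3) (2*M+n) n) * hx +
          q^Qcap m n * gb q (3*M) m * gb (q^3) (2*M+n) n * hy
      · intro b _ hb
        rw [if_neg (by omega)]
      · intro hn; simp at hn; omega
    · rw [Finset.sum_eq_zero]
      · simp [D, he]
      · intro n _
        rw [if_neg]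
        intro hh
        exact he ⟨n, by omega⟩
  · intro m _ hm
    apply Finset.sum_eq_zero
    intro n _
    rw [if_neg]
    simp at hm; omega

lemma LHS_eq (q : ℂ) (hq : q ≠ 0) (N : ℕ) : ∑' m : ℕ, ∑' n : ℕ, tm q N m n = LL q N := by
  have h1 : ∀ m, ∑' n : ℕ, tm q N m n = ∑ n ∈ range (N+1), tm q N m n := by
    intro m
    apply tsum_eq_sum
    intro n hn
    apply tm_zero
    simp at hn; omega
  simp only [h1]
  rw [tsum_eq_sum (s := range (N+1))]
  · unfold LL
    symm
    rw [Finset.sum_congr rfl (fun M hM => v_sum q hq N M (by simp at hM; omega)), Finset.sum_comm]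
    apply Finset.sum_congr rfl
    intro m _
    rw [Finset.sum_comm]
    apply Finset.sum_congr rfl
    intro n _
    by_cases hmn : m + 2*n ≤ N
    · rw [Finset.sum_eq_single (N - (m+2*n))]
      · rw [if_pos (by omega)]
      · intro b _ hb
        rw [if_neg (by omega)]
      · intro hh; exact absurd (Finset.mem_range.mpr (by omega)) hh
    · rw [tm_zero _ _ _ _ (by omega)]
      simp
  · intro m hm
    apply Finset.sum_eq_zero
    intro n _
    apply tm_zero
    simp at hm; omega

end FC

theorem finite_capparelli_one_N (N : ℕ) (q : ℂ) (hq : q ≠ 0) (hroot : ∀ k : ℕ, 0 < k → q ^ k ≠ 1) :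
    (∑' m : ℕ, ∑' n : ℕ, q ^ Qcap m n *
        qBinom (3 * ((N : ℤ) - 2 * n - m)) (m : ℤ) q *
        qBinom (2 * ((N : ℤ) - 2 * n - m) + n) (n : ℤ) (q ^ 3)) =
    ∑ l ∈ Finset.range (N + 1),
      q ^ (3 * ((((N : ℤ) - 2 * l) * ((N : ℤ) - 2 * l - 1)) / 2)) *
        qBinom (N : ℤ) (2 * (l : ℤ)) (q ^ 3) * qPoch (-q ^ 2) (q ^ 6) l * qPoch (-q ^ 4) (q ^ 6) l := by
  
  rw [FC.RR_eq q hroot N, ← (FC.LL_eq_RR q hq hroot N).1, ← FC.LHS_eq q hq N]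
  rfl
end

section
/- For every nonnegative integer M and every nonzero complex number q that is not a root of unity, Σ_{m,n≥0} q^{Q(m,n)+m+3n} (q³;q³)_M / ( (q;q)_m (q³;q³)_n (q³;q³)_{M-2n-m} ) + Σ_{m,n≥0} q^{Q(m,n)+3m+6n+1} (q³;q³)_M / ( (q;q)_m (q³;q³)_n (q³;q³)_{M-2n-m} ) = Σ_{j=-M-1}^{M} q^{3j²+2j} [2M+1 choose M-j]_{q³}. -/
namespace Capp
open PowerSeries

lemma poch_succ (a q : ℂ) (n : ℕ) : qPoch a q (n+1) = qPoch a q n * (1 - a * q^n) := by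
  simp [qPoch, Finset.prod_range_succ]

lemma poch_ne (q : ℂ) (h : ∀ k : ℕ, 0 < k → q ^ k ≠ 1) (n : ℕ) : qPoch q q n ≠ 0 := by
  rw [qPoch, Finset.prod_ne_zero_iff]
  intro j _ h0
  apply h (j+1) (by omega)
  rw [pow_succ']
  linear_combination -h0

noncomputable def A (q : ℂ) : PowerSeries ℂ := mk fun m => q ^ (m.choose 2) * (qPoch q q m)⁻¹
noncomputable def Cs (p : ℂ) : PowerSeries ℂ := mk fun m => (qPoch p p m)⁻¹
noncomputable def B (p c : ℂ) : PowerSeries ℂ :=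
  mk fun l => if Even l then c ^ (l/2) * (qPoch p p (l/2))⁻¹ else 0
noncomputable def tau (p : ℂ) (f : PowerSeries ℂ) : PowerSeries ℂ :=
  mk fun i => p ^ ((i+1).choose 2) * coeff i f

lemma resc_C (a b : ℂ) : rescale a (C b) = C b := by
  ext n
  simp only [coeff_rescale, coeff_C]
  split_ifs with h <;> simp [h]

lemma A_eq (q : ℂ) (h : ∀ k : ℕ, 0 < k → q ^ k ≠ 1) : A q = (1 + X) * rescale q (A q) := by
  ext n
  rcases n with _ | n
  · rw [add_mul, one_mul, map_add, coeff_zero_X_mul]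
    simp [A, coeff_rescale, -coeff_zero_eq_constantCoeff]
  · rw [add_mul, one_mul, map_add, coeff_succ_X_mul]
    simp only [A, coeff_rescale, coeff_mk]
    rw [poch_succ]
    have h1 := poch_ne q h n
    have h2 := poch_ne q h (n+1)
    rw [poch_succ] at h2
    have h3 := right_ne_zero_of_mul h2
    have : (n+1).choose 2 = n + n.choose 2 := by
      rw [Nat.choose_succ_succ' n 1]; simp
    rw [this, pow_add, mul_inv]
    have h4 := mul_inv_cancel₀ h3
    linear_combination q ^ n * q ^ n.choose 2 * (qPoch q q n)⁻¹ * h4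

lemma Cs_eq (q : ℂ) (h : ∀ k : ℕ, 0 < k → q ^ k ≠ 1) : (1 - X) * Cs q = rescale q (Cs q) := by
  ext n
  rcases n with _ | n
  · simp [Cs, sub_mul]
  · rw [sub_mul, one_mul, map_sub, coeff_succ_X_mul]
    simp only [Cs, coeff_rescale, coeff_mk]
    rw [poch_succ]
    have h1 := poch_ne q h n
    have h2 := poch_ne q h (n+1)
    rw [poch_succ] at h2
    have h3 := right_ne_zero_of_mul h2
    field_simp
    ring

lemma B_eq (p c : ℂ) (h : ∀ k : ℕ, 0 < k → p ^ k ≠ 1) :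
    (1 - C c * (X * X)) * B p c = B p (c * p) := by
  ext n
  rw [sub_mul, one_mul, map_sub, mul_assoc, mul_assoc, coeff_C_mul]
  rcases n with _ | _ | n
  · simp [B]
  · simp [B, coeff_succ_X_mul]
  · rw [coeff_succ_X_mul, coeff_succ_X_mul]
    simp only [B, coeff_mk]
    have e : Even (n + 1 + 1) ↔ Even n := by
      rw [Nat.even_add_one, Nat.even_add_one, not_not]
    by_cases hn : Even n
    · rw [if_pos hn, if_pos (e.2 hn), if_pos (e.2 hn)]
      have e2 : (n + 1 + 1) / 2 = n / 2 + 1 := by omega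
      rw [e2]
      generalize n / 2 = n
      rw [poch_succ]
      have h1 := poch_ne p h n
      have h2 := poch_ne p h (n+1)
      rw [poch_succ] at h2
      have h3 := right_ne_zero_of_mul h2
      field_simp
      ring
    · rw [if_neg hn, if_neg (mt e.1 hn), if_neg (mt e.1 hn)]; simp

lemma B_resc (p c a : ℂ) : rescale a (B p c) = B p (c * a^2) := by
  ext n
  simp only [B, coeff_rescale, coeff_mk]
  by_cases hn : Even n
  · rw [if_pos hn, if_pos hn]
    obtain ⟨k, rfl⟩ := hn
    have : (k + k) / 2 = k := by omega
    rw [this]; ring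
  · simp [hn]

lemma tau_add (p : ℂ) (f g) : tau p (f + g) = tau p f + tau p g := by
  ext n; simp [tau, mul_add]
lemma tau_sub (p : ℂ) (f g) : tau p (f - g) = tau p f - tau p g := by
  ext n; simp [tau, mul_sub]
lemma tau_C (p a : ℂ) (g) : tau p (C a * g) = C a * tau p g := by
  ext n; simp [tau, coeff_C_mul]; ring
lemma tau_resc (p a : ℂ) (g) : tau p (rescale a g) = rescale a (tau p g) := by
  ext n; simp [tau]; ring
lemma tau_X (p : ℂ) (g) : tau p (X * g) = C p * (X * rescale p (tau p g)) := by
  ext n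
  rw [coeff_C_mul]
  rcases n with _ | n
  · simp [tau]
  · rw [coeff_succ_X_mul]
    simp only [tau, coeff_rescale, coeff_mk]
    rw [coeff_succ_X_mul]
    have : (n+1+1).choose 2 = (n + 1) + (n+1).choose 2 := by
      rw [Nat.choose_succ_succ' (n+1) 1]; simp
    rw [this, pow_add]; ring

noncomputable def G (q : ℂ) : PowerSeries ℂ :=
  A q * B (q^3) 1 + C q * (rescale (q^2) (A q) * B (q^3) (q^3))

lemma A_resc (q : ℂ) (h : ∀ k : ℕ, 0 < k → q ^ k ≠ 1) (a : ℂ) :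
    rescale a (A q) = (1 + C a * X) * rescale (a * q) (A q) := by
  conv_lhs => rw [A_eq q h]
  rw [map_mul, map_add, map_one, rescale_X, rescale_rescale, mul_comm a q]

lemma G_fact (q : ℂ) (h : ∀ k : ℕ, 0 < k → q ^ k ≠ 1) (h3 : ∀ k : ℕ, 0 < k → (q^3) ^ k ≠ 1) :
    G q = (1 + C q) * (1 + X) * rescale (q^2) (A q) * B (q^3) 1 := by
  have h1 := A_resc q h 1
  have h2 := A_resc q h q
  have hB := B_eq (q^3) 1 h3
  simp only [one_mul, map_one, rescale_one, RingHom.id_apply] at h1 hB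
  rw [← pow_two] at h2
  rw [G]
  linear_combination B (q^3) 1 * (h1 + (1 + X) * h2) - C q * rescale (q^2) (A q) * hB

lemma G_eq (q : ℂ) (h : ∀ k : ℕ, 0 < k → q ^ k ≠ 1) (h3 : ∀ k : ℕ, 0 < k → (q^3) ^ k ≠ 1) :
    (1 + C q ^ 2 * X) * (1 + C q ^ 4 * X) * rescale (q^3) (G q)
      = (1 - X) * (1 - C q ^ 3 * (X * X)) * G q := by
  have h1 := A_resc q h (q^2)
  have h2 := A_resc q h (q^2*q)
  have h4 := A_resc q h (q^2*q*q)
  have hB := B_eq (q^3) 1 h3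
  have hB2 := B_eq (q^3) (1 * q^3) h3
  rw [G_fact q h h3]
  simp only [map_mul, map_add, map_one, rescale_X, resc_C, rescale_rescale, B_resc]
  have e1 : q^2 * q^3 = q^2*q*q*q := by ring
  have e2 : (1 : ℂ) * (q^3)^2 = 1 * q^3 * q^3 := by ring
  rw [h1, h2, h4, e1, e2, ← hB2, ← hB]
  simp only [map_mul, map_pow, map_one]
  ring

lemma E_eq (q : ℂ) (h : ∀ k : ℕ, 0 < k → q ^ k ≠ 1) (h3 : ∀ k : ℕ, 0 < k → (q^3) ^ k ≠ 1)
    (E) (hE : E = tau (q^3) (G q)) : 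
    rescale (q^3) E + C (q^2+q^4) * C (q^3) * X * rescale ((q^3)^2) E + C (q^3)^5*X^2*rescale ((q^3)^3) E
     = E - C (q^3) * X * rescale (q^3) E - C (q^3)^4 * X^2*rescale ((q^3)^2) E
       + C (q^3)^7*X^3*rescale ((q^3)^3) E := by
  have hG := G_eq q h h3
  have hG2 : rescale (q^3) (G q) + C (q^2+q^4) * (X * rescale (q^3) (G q)) 
      + C ((q^3)^2) * (X * (X * rescale (q^3) (G q)))
      = G q - X * G q - C (q^3) * (X * (X * G q)) + C (q^3) * (X * (X * (X * G q))) := by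
    simp only [map_pow, map_add]
    linear_combination hG
  have := congrArg (tau (q^3)) hG2
  simp only [tau_add, tau_sub, tau_C, tau_X, tau_resc, ← hE] at this
  simp only [map_mul, rescale_X, resc_C, rescale_rescale] at this
  have e1 : q^3*q^3 = (q^3)^2 := by ring
  have e2 : q^3*(q^3)^2 = (q^3)^3 := by ring
  have e3 : (q^3)^2*q^3 = (q^3)^3 := by ring
  simp only [e1, e3] at this
  simp only [map_pow, map_add] at this ⊢
  linear_combination this

lemma V_eq (q : ℂ) (h : ∀ k : ℕ, 0 < k → q ^ k ≠ 1) (h3 : ∀ k : ℕ, 0 < k → (q^3) ^ k ≠ 1)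
    (E V) (hE : E = tau (q^3) (G q)) (hV : V = Cs (q^3) * E) : 
    (1 - C (q^3)^2 * X^2) * rescale (q^3) V + C (q^2+q^4) * C (q^3) * X * rescale ((q^3)^2) V
      + C (q^3)^4*X^2*rescale ((q^3)^2) V + C (q^3)^5*X^2*rescale ((q^3)^3) V
     = (1 - X) * (1 - C (q^3) * X) * V := by
  have hh := E_eq q h h3 E hE
  have k1 := Cs_eq (q^3) h3
  have k2 := congrArg (rescale (q^3)) k1
  have k3 := congrArg (rescale (q^3)) k2
  have e1 : q^3*q^3 = (q^3)^2 := by ring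
  have e2 : q^3*(q^3)^2 = (q^3)^3 := by ring
  have e3 : (q^3)^2*q^3 = (q^3)^3 := by ring
  simp only [map_mul, map_sub, map_one, rescale_X, resc_C, rescale_rescale, e1, e3] at k2 k3
  rw [hV]
  simp only [map_mul]
  rw [← k3, ← k2, ← k1]
  linear_combination (1-X) * (1 - C (q^3) * X) * Cs (q^3) * hh


noncomputable def V (q : ℂ) : PowerSeries ℂ := Cs (q^3) * tau (q^3) (G q)

lemma V_zero (q : ℂ) : coeff 0 (V q) = 1 + q := by
  simp [V, tau, G, A, B, Cs, qPoch, coeff_mul, coeff_rescale, -coeff_zero_eq_constantCoeff]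

lemma V_rec (q : ℂ) (h : ∀ k : ℕ, 0 < k → q ^ k ≠ 1) (h3 : ∀ k : ℕ, 0 < k → (q^3) ^ k ≠ 1)
    (M : ℕ) (p : ℂ) (hp : p = q^3) :
    (1 - p^(M+2)) * coeff (M+2) (V q) = (1 + p + (q^2+q^4) * p^(2*M+3)) * coeff (M+1) (V q)
      + (p^(2*M+4) - p) * (1 + p^(M+1)) * coeff M (V q) := by
  have hV := V_eq q h h3 _ (V q) rfl rfl
  rw [← hp] at hV
  obtain ⟨c, hc⟩ : ∃ c, c = 1 + p := ⟨_, rfl⟩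
  have hV2 : rescale p (V q) - C (p^2) * (X * (X * rescale p (V q)))
      + C ((q^2+q^4) * p) * (X * rescale (p^2) (V q)) + C (p^4) * (X * (X * rescale (p^2) (V q)))
      + C (p^5) * (X * (X * rescale (p^3) (V q))) 
      = V q - C c * (X * V q) + C p * (X * (X * V q)) := by
    rw [hc]
    simp only [map_pow, map_add, map_mul, map_one] at hV ⊢
    linear_combination hV
  have := congrArg (coeff (M+1+1)) hV2
  simp only [map_add, map_sub, coeff_C_mul, coeff_succ_X_mul, coeff_rescale] at this
  rw [hc] at this
  linear_combination -this

lemma V_one (q : ℂ) (h : ∀ k : ℕ, 0 < k → q ^ k ≠ 1) (h3 : ∀ k : ℕ, 0 < k → (q^3) ^ k ≠ 1)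
    (p : ℂ) (hp : p = q^3) :
    (1 - p) * coeff 1 (V q) = (1 + p + (q^2+q^4) * p) * coeff 0 (V q) := by
  have hV := V_eq q h h3 _ (V q) rfl rfl
  rw [← hp] at hV
  obtain ⟨c, hc⟩ : ∃ c, c = 1 + p := ⟨_, rfl⟩
  have hV2 : rescale p (V q) - C (p^2) * (X * (X * rescale p (V q)))
      + C ((q^2+q^4) * p) * (X * rescale (p^2) (V q)) + C (p^4) * (X * (X * rescale (p^2) (V q)))
      + C (p^5) * (X * (X * rescale (p^3) (V q))) 
      = V q - C c * (X * V q) + C p * (X * (X * V q)) := by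
    rw [hc]
    simp only [map_pow, map_add, map_mul, map_one] at hV ⊢
    linear_combination hV
  have := congrArg (coeff (0+1)) hV2
  simp only [map_add, map_sub, coeff_C_mul, coeff_succ_X_mul, coeff_rescale, coeff_zero_X_mul] at this
  rw [hc] at this
  linear_combination -this

/-- sum over `m + l = i` with `l = 2n`, in box form -/
lemma anti_box (M i : ℕ) (hi : i ≤ M) (f g : ℕ → ℂ) :
    ∑ x ∈ Finset.HasAntidiagonal.antidiagonal i, f x.1 * (if Even x.2 then g (x.2/2) else 0)
      = ∑ m ∈ Finset.range (M+1), ∑ n ∈ Finset.range (M+1), if m + 2 * n = i then f m * g n else 0 := by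
  simp only [mul_ite, mul_zero]
  rw [← Finset.sum_filter]
  rw [← Finset.sum_product' (f := fun m n => if m + 2 * n = i then f m * g n else 0)]
  rw [← Finset.sum_filter]
  refine Finset.sum_bij' (fun x _ => (x.1, x.2/2)) (fun y _ => (y.1, 2*y.2)) ?_ ?_ ?_ ?_ ?_
  · rintro ⟨a, b⟩ hx
    simp [Nat.even_iff] at hx ⊢
    omega
  · rintro ⟨a, b⟩ hx
    simp [Nat.even_iff] at hx ⊢
    omega
  · rintro ⟨a, b⟩ hx
    simp [Nat.even_iff] at hx ⊢
    omega
  · rintro ⟨a, b⟩ hx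
    simp
  · rintro ⟨a, b⟩ hx
    rfl

lemma V_coeff_aux (p : ℂ) (M : ℕ) (f g : ℕ → ℂ) (F : PowerSeries ℂ)
    (hF : F = mk f * mk fun l => if Even l then g (l/2) else 0) :
    coeff M (Cs p * tau p F) = ∑ m ∈ Finset.range (M+1), ∑ n ∈ Finset.range (M+1),
      p ^ ((m+2*n+1).choose 2) * f m * g n * qPochInvZ p ((M:ℤ) - 2 * n - m) := by
  rw [mul_comm, coeff_mul, Finset.Nat.sum_antidiagonal_eq_sum_range_succ_mk]
  have : ∀ i ∈ Finset.range (M+1), coeff i (tau p F) * coeff (M - i) (Cs p) 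
      = ∑ m ∈ Finset.range (M+1), ∑ n ∈ Finset.range (M+1), if m + 2 * n = i then
        p ^ ((m+2*n+1).choose 2) * f m * g n * qPochInvZ p ((M:ℤ) - 2 * n - m) else 0 := by
    intro i hi
    have hi' : i ≤ M := by simp at hi; omega
    simp only [tau, Cs, coeff_mk]
    rw [hF, coeff_mul]
    simp only [coeff_mk]
    rw [anti_box M i hi' f g, mul_assoc, Finset.sum_mul, Finset.mul_sum]
    refine Finset.sum_congr rfl fun m _ => ?_
    rw [Finset.sum_mul, Finset.mul_sum]
    refine Finset.sum_congr rfl fun n _ => ?_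
    split_ifs with hh
    · rw [hh, qPochInvZ, if_pos (by omega)]
      have : ((M:ℤ) - 2 * n - m).toNat = M - i := by omega
      rw [this]; ring
    · simp
  rw [Finset.sum_congr rfl this, Finset.sum_comm]
  refine Finset.sum_congr rfl fun m _ => ?_
  rw [Finset.sum_comm]
  refine Finset.sum_congr rfl fun n _ => ?_
  rw [Finset.sum_ite_eq]
  split_ifs with hh
  · rfl
  · rw [qPochInvZ, if_neg, mul_zero]
    simp at hh; omega

lemma tsum_box (M : ℕ) (F : ℕ → ℕ → ℂ) (hF : ∀ m n, M < m + 2 * n → F m n = 0) :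
    ∑' m, ∑' n, F m n = ∑ m ∈ Finset.range (M+1), ∑ n ∈ Finset.range (M+1), F m n := by
  rw [tsum_eq_sum (s := Finset.range (M+1))]
  · refine Finset.sum_congr rfl fun m _ => ?_
    rw [tsum_eq_sum]
    intro n hn
    apply hF
    simp at hn; omega
  · intro m hm
    have : ∀ n, F m n = 0 := by
      intro n; apply hF
      simp at hm; omega
    simp [this]

lemma choose_two (m n : ℕ) : 3 * (m+2*n+1).choose 2 + m.choose 2 = Qcap m n + m + 3 * n := by
  have h1 := Nat.triangle_succ (m+2*n)
  have h2 : m.choose 2 + m.choose 2 + m = m * m := by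
    induction m with
    | zero => rfl
    | succ k ih =>
      rw [Nat.choose_succ_succ' k 1]; simp; nlinarith [ih (Nat.triangle_succ _)]
  have h3 : (m+2*n+1).choose 2 * 2 = (m+2*n+1)*(m+2*n) := by
    rw [Nat.choose_two_right]
    exact Nat.div_mul_cancel (Nat.even_mul_pred_self _).two_dvd
  rw [Qcap]
  nlinarith

lemma L_eq (q : ℂ) (M : ℕ) :
    (∑' m : ℕ, ∑' n : ℕ, q ^ (Qcap m n + m + 3 * n) * qPoch (q ^ 3) (q ^ 3) M *
        (qPoch q q m)⁻¹ * (qPoch (q ^ 3) (q ^ 3) n)⁻¹ * qPochInvZ (q ^ 3) ((M : ℤ) - 2 * n - m)) +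
      (∑' m : ℕ, ∑' n : ℕ, q ^ (Qcap m n + 3 * m + 6 * n + 1) * qPoch (q ^ 3) (q ^ 3) M *
        (qPoch q q m)⁻¹ * (qPoch (q ^ 3) (q ^ 3) n)⁻¹ * qPochInvZ (q ^ 3) ((M : ℤ) - 2 * n - m)) =
    qPoch (q^3) (q^3) M * coeff M (V q) := by
  have hz : ∀ m n : ℕ, M < m + 2 * n → qPochInvZ (q ^ 3) ((M : ℤ) - 2 * n - m) = 0 := by
    intro m n hmn
    rw [qPochInvZ, if_neg]; omega
  rw [tsum_box M _ (fun m n hmn => by rw [hz m n hmn, mul_zero]),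
    tsum_box M _ (fun m n hmn => by rw [hz m n hmn, mul_zero])]
  change _ = qPoch (q^3) (q^3) M * coeff M (Cs (q^3) * tau (q^3) (G q))
  rw [G, tau_add, tau_C, mul_add, mul_left_comm, map_add, coeff_C_mul]
  rw [V_coeff_aux (q^3) M (fun m => q ^ (m.choose 2) * (qPoch q q m)⁻¹) 
    (fun n => 1^n * (qPoch (q^3) (q^3) n)⁻¹) (A q * B (q^3) 1) rfl]
  rw [V_coeff_aux (q^3) M (fun m => (q^2)^m * (q ^ (m.choose 2) * (qPoch q q m)⁻¹)) 
    (fun n => (q^3)^n * (qPoch (q^3) (q^3) n)⁻¹) (rescale (q^2) (A q) * B (q^3) (q^3)) (by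
      rw [B]; congr 1; ext n; simp [A, coeff_rescale])]
  rw [mul_add]
  simp only [Finset.mul_sum]
  congr 1
  · refine Finset.sum_congr rfl fun m _ => Finset.sum_congr rfl fun n _ => ?_
    rw [← choose_two, pow_add, pow_mul]
    ring
  · refine Finset.sum_congr rfl fun m _ => Finset.sum_congr rfl fun n _ => ?_
    have : Qcap m n + 3 * m + 6 * n + 1 = 3 * (m+2*n+1).choose 2 + m.choose 2 + 2 * m + 3 * n + 1 := by
      rw [choose_two]; ring
    rw [this]
    simp only [pow_add, pow_mul]
    ring

/-! Right-hand side -/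

noncomputable def tt (q : ℂ) (M : ℕ) (j : ℤ) : ℂ :=
  q ^ (3 * j ^ 2 + 2 * j) * qBinom (2 * (M : ℤ) + 1) ((M : ℤ) - j) (q ^ 3)

lemma r_rec (p : ℂ) (h : ∀ k : ℕ, 0 < k → p ^ k ≠ 1) (n : ℤ) :
    qPochInvZ p (n - 1) = (1 - p ^ n) * qPochInvZ p n := by
  rcases lt_trichotomy n 0 with hn | hn | hn
  · rw [qPochInvZ, qPochInvZ, if_neg (by omega), if_neg (by omega), mul_zero]
  · subst hn; simp [qPochInvZ]
  · obtain ⟨k, rfl⟩ : ∃ k : ℕ, n = (k:ℤ) + 1 := ⟨(n-1).toNat, by omega⟩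
    rw [qPochInvZ, qPochInvZ, if_pos (by omega), if_pos (by omega)]
    have e1 : ((k:ℤ) + 1 - 1).toNat = k := by omega
    have e2 : ((k:ℤ) + 1).toNat = k + 1 := by omega
    have e3 : p ^ ((k:ℤ)+1) = p * p^k := by
      rw [← Nat.cast_succ, zpow_natCast, pow_succ']
    rw [e1, e2, e3, poch_succ]
    have h2 := poch_ne p h (k+1)
    rw [poch_succ] at h2
    have h3 := right_ne_zero_of_mul h2
    have h4 := mul_inv_cancel₀ h3
    rw [mul_inv]
    linear_combination -(qPoch p p k)⁻¹ * h4

lemma tt_eq (q : ℂ) (M : ℕ) (j : ℤ) : tt q M j = q ^ (3 * j ^ 2 + 2 * j) *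
    (qPoch (q^3) (q^3) (2*M+1) * qPochInvZ (q^3) (M - j) * qPochInvZ (q^3) (M + 1 + j)) := by
  rw [tt, qBinom]
  congr 1
  split_ifs with hh
  · rw [qPochInvZ, qPochInvZ, if_pos (by omega), if_pos (by omega)]
    have e1 : (2*(M:ℤ)+1).toNat = 2*M+1 := by omega
    have e2 : (2*(M:ℤ)+1 - (M - j)) = M + 1 + j := by omega
    rw [e1, e2]
  · rcases not_and_or.1 hh with h | h
    · rw [qPochInvZ, if_neg (by omega)]; simp
    · rw [mul_assoc, mul_comm (qPochInvZ _ _), qPochInvZ, if_neg (by omega)]; simp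

lemma tt_rec (q : ℂ) (hq : q ≠ 0) (h3 : ∀ k : ℕ, 0 < k → (q^3) ^ k ≠ 1) (M : ℕ) (j : ℤ) (p : ℂ)
    (hp : p = q^3) :
    tt q (M+2) j = (1 + p) * tt q (M+1) j + p^(2*M+3) * (q^2 * tt q (M+1) (j-1) + q^4 * tt q (M+1) (j+1))
      - p * (1 - p^(2*M+2)) * (1 - p^(2*M+3)) * tt q M j := by
  have hp0 : p ≠ 0 := by rw [hp]; exact pow_ne_zero _ hq
  simp only [tt_eq]
  rw [← hp] at h3 ⊢
  have f1 : ∀ N, qPoch p p (N+2) = qPoch p p N * (1 - p^(N+1)) * (1-p^(N+2)) := by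
    intro N; rw [poch_succ, poch_succ]; ring
  have n1 : 2*(M+2)+1 = 2*M+1+2+2 := by ring
  have n2 : 2*(M+1)+1 = 2*M+1+2 := by ring
  rw [n1, n2, f1 (2*M+1+2), f1 (2*M+1)]
  push_cast
  have ra := r_rec p h3 ((M:ℤ)+2-j)
  have ra' := r_rec p h3 ((M:ℤ)+2-j-1)
  have rb := r_rec p h3 ((M:ℤ)+3+j)
  have rb' := r_rec p h3 ((M:ℤ)+3+j-1)
  rw [ra] at ra'
  rw [rb] at rb'
  have i1 : (M:ℤ)+2+1+j = M+3+j := by ring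
  have i2 : (M:ℤ)+1-j = M+2-j-1 := by ring
  have i3 : (M:ℤ)+1+1+j = M+3+j-1 := by ring
  have i4 : (M:ℤ)+1-(j-1) = M+2-j := by ring
  have i5 : (M:ℤ)+1+1+(j-1) = M+3+j-1-1 := by ring
  have i6 : (M:ℤ)+1-(j+1) = M+2-j-1-1 := by ring
  have i7 : (M:ℤ)+1+1+(j+1) = M+3+j := by ring
  have i8 : (M:ℤ)-j = M+2-j-1-1 := by ring
  have i9 : (M:ℤ)+1+j = M+3+j-1-1 := by ring
  rw [i1, i2, i3, i4, i5, i6, i7, i8, i9, ra', rb', ra, rb]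
  generalize qPochInvZ p ((M:ℤ)+2-j) = α
  generalize qPochInvZ p ((M:ℤ)+3+j) = β
  generalize qPoch p p (2*M+1) = γ
  have z1 : q ^ (3 * (j-1)^2 + 2*(j-1)) = q ^ (3*j^2+2*j) * (q * ((p^j)⁻¹)^2) := by
    rw [hp, ← zpow_natCast q 3, ← zpow_mul, ← zpow_neg, ← zpow_natCast _ 2, ← zpow_mul, ← zpow_one_add₀ hq, ← zpow_add₀ hq]
    congr 1; push_cast; ring
  have z2 : q ^ (3 * (j+1)^2 + 2*(j+1)) = q ^ (3*j^2+2*j) * (q^5 * (p^j)^2) := by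
    rw [hp, ← zpow_natCast q 3, ← zpow_mul, ← zpow_natCast _ 2, ← zpow_mul, ← zpow_natCast q 5, ← zpow_add₀ hq, ← zpow_add₀ hq]
    congr 1; push_cast; ring
  have z3 : p ^ ((M:ℤ)+2-j) = p^M * p^2 * (p^j)⁻¹ := by
    rw [zpow_sub₀ hp0, zpow_add₀ hp0]; norm_cast
  have z4 : p ^ ((M:ℤ)+2-j-1) = p^M * p * (p^j)⁻¹ := by
    rw [zpow_sub_one₀ hp0, z3]; field_simp
  have z5 : p ^ ((M:ℤ)+3+j) = p^M * p^3 * p^j := by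
    rw [zpow_add₀ hp0, zpow_add₀ hp0]; norm_cast
  have z6 : p ^ ((M:ℤ)+3+j-1) = p^M * p^2 * p^j := by
    rw [zpow_sub_one₀ hp0, z5]; field_simp
  rw [z1, z2, z3, z4, z5, z6]
  have hJ : p^j ≠ 0 := zpow_ne_zero _ hp0
  generalize p^j = J at hJ ⊢
  generalize q ^ (3*j^2+2*j) = T
  have e2 : p^(2*M+3) = (p^M)^2*p^3 := by ring
  have e3 : p^(2*M+2) = (p^M)^2*p^2 := by ring
  have e4 : p^(2*M+1+2+1) = (p^M)^2*p^4 := by ring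
  have e5 : p^(2*M+1+2+2) = (p^M)^2*p^5 := by ring
  rw [e2, e3, e4, e5]
  generalize p^M = m
  have q1 : q^2 * (T * (q * J⁻¹^2) * (γ * (1 - m ^ 2 * p ^ 2) * (1 - m ^ 2 * p ^ 3) * α *
      ((1 - m * p ^ 2 * J) * ((1 - m * p ^ 3 * J) * β)))) = p * (T * J⁻¹^2 *
      (γ * (1 - m ^ 2 * p ^ 2) * (1 - m ^ 2 * p ^ 3) * α *
      ((1 - m * p ^ 2 * J) * ((1 - m * p ^ 3 * J) * β)))) := by
    linear_combination -(T * J⁻¹^2 *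
      (γ * (1 - m ^ 2 * p ^ 2) * (1 - m ^ 2 * p ^ 3) * α *
      ((1 - m * p ^ 2 * J) * ((1 - m * p ^ 3 * J) * β)))) * hp
  have q2 : ∀ Y, q^4 * (T * (q^5 * J^2) * Y) = p^3 * (T * J^2 * Y) := by
    intro Y; rw [hp]; ring
  rw [q1, q2]
  clear q1 q2 e2 e3 e4 e5 z1 z2 z3 z4 z5 z6 ra rb ra' rb' f1 hp
  field_simp
  ring

lemma tt_zero (q : ℂ) (M : ℕ) (j : ℤ) (hj : j ∉ Finset.Icc (-(M : ℤ) - 1) (M : ℤ)) : tt q M j = 0 := by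
  rw [tt, qBinom, if_neg, mul_zero]
  simp at hj; omega

lemma tt_summable (q : ℂ) (M : ℕ) : Summable (tt q M) :=
  summable_of_ne_finset_zero (s := Finset.Icc (-(M : ℤ) - 1) (M : ℤ)) (tt_zero q M)

noncomputable def U (q : ℂ) (M : ℕ) : ℂ := ∑' j, tt q M j

lemma U_rec (q : ℂ) (hq : q ≠ 0) (h3 : ∀ k : ℕ, 0 < k → (q^3) ^ k ≠ 1) (M : ℕ) (p : ℂ)
    (hp : p = q^3) :
    U q (M+2) = (1 + p + (q^2+q^4) * p^(2*M+3)) * U q (M+1)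
      - p * (1 - p^(2*M+2)) * (1 - p^(2*M+3)) * U q M := by
  have s1 := (tt_summable q (M+1)).hasSum
  have s0 := (tt_summable q M).hasSum
  have sm := (Equiv.hasSum_iff (Equiv.subRight (1:ℤ))).2 s1
  have sp := (Equiv.hasSum_iff (Equiv.addRight (1:ℤ))).2 s1
  have := ((s1.mul_left (1+p)).add (((sm.mul_left (q^2)).add (sp.mul_left (q^4))).mul_left (p^(2*M+3)))).sub
    (s0.mul_left (p * (1 - p^(2*M+2)) * (1 - p^(2*M+3))))
  have e := this.tsum_eq
  rw [U, U, U]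
  rw [tsum_congr (fun j => tt_rec q hq h3 M j p hp)]
  simp only [Function.comp, Equiv.subRight_apply, Equiv.coe_addRight] at e
  rw [e]; ring

lemma U_fin (q : ℂ) (M : ℕ) : U q M = ∑ j ∈ Finset.Icc (-(M : ℤ) - 1) (M : ℤ), tt q M j :=
  tsum_eq_sum (tt_zero q M)

lemma U_zero (q : ℂ) (h3 : ∀ k : ℕ, 0 < k → (q^3) ^ k ≠ 1) : U q 0 = 1 + q := by
  rw [U_fin]
  have : Finset.Icc (-((0:ℕ):ℤ) - 1) ((0:ℕ):ℤ) = {-1, 0} := by decide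
  rw [this, Finset.sum_insert (by decide), Finset.sum_singleton, tt_eq, tt_eq]
  have h1 : (1 - q^3) ≠ 0 := fun h0 => h3 1 one_pos (by linear_combination -h0)
  simp [qPochInvZ, qPoch]
  field_simp
  ring

lemma U_one (q : ℂ) (hq : q ≠ 0) (h3 : ∀ k : ℕ, 0 < k → (q^3) ^ k ≠ 1) (p : ℂ)
    (hp : p = q^3) : U q 1 = (1 + p + (q^2+q^4) * p) * (1 + q) := by
  rw [U_fin]
  have : Finset.Icc (-((1:ℕ):ℤ) - 1) ((1:ℕ):ℤ) = {-2, -1, 0, 1} := by decide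
  rw [this, Finset.sum_insert (by decide), Finset.sum_insert (by decide), Finset.sum_insert (by decide), Finset.sum_singleton, tt_eq, tt_eq, tt_eq, tt_eq, ← hp]
  rw [← hp] at h3
  have h1 : (1 - p) ≠ 0 := fun h0 => h3 1 one_pos (by linear_combination -h0)
  have h2 : (1 - p*p) ≠ 0 := fun h0 => h3 2 two_pos (by linear_combination -h0)
  have h4 : (1 - p*p^2) ≠ 0 := fun h0 => h3 3 three_pos (by linear_combination -h0)
  have r0 : qPochInvZ p 0 = 1 := by simp [qPochInvZ, qPoch]
  have r1 : qPochInvZ p 1 = (1-p)⁻¹ := by simp [qPochInvZ, qPoch]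
  have r2 : qPochInvZ p 2 = ((1-p)*(1-p*p))⁻¹ := by simp [qPochInvZ, qPoch, Finset.prod_range_succ]
  have r3 : qPochInvZ p 3 = ((1-p)*(1-p*p)*(1-p*p^2))⁻¹ := by simp [qPochInvZ, qPoch, Finset.prod_range_succ]
  have p3 : qPoch p p (2*1+1) = (1-p)*(1-p*p)*(1-p*p^2) := by simp [qPoch, Finset.prod_range_succ]
  have k1 : (1-p)*(1-p*p)*(1-p*p^2) * (1-p)⁻¹ * ((1-p)*(1-p*p))⁻¹ = 1 + p + p^2 := by
    rw [← div_eq_mul_inv, ← div_eq_mul_inv, div_div, div_eq_iff (by positivity)]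
    ring
  have k1' : (1-p)*(1-p*p)*(1-p*p^2) * ((1-p)*(1-p*p))⁻¹ * (1-p)⁻¹ = 1 + p + p^2 := by
    rw [← k1]; ring
  have k0 : (1-p)*(1-p*p)*(1-p*p^2) * ((1-p)*(1-p*p)*(1-p*p^2))⁻¹ = 1 :=
    mul_inv_cancel₀ (mul_ne_zero (mul_ne_zero h1 h2) h4)
  have a1 : ((1:ℕ):ℤ) - -2 = 3 := by norm_num
  have a2 : ((1:ℕ):ℤ) + 1 + -2 = 0 := by norm_num
  have a3 : ((1:ℕ):ℤ) - -1 = 2 := by norm_num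
  have a4 : ((1:ℕ):ℤ) + 1 + -1 = 1 := by norm_num
  have a5 : ((1:ℕ):ℤ) - 0 = 1 := by norm_num
  have a6 : ((1:ℕ):ℤ) + 1 + 0 = 2 := by norm_num
  have a7 : ((1:ℕ):ℤ) - 1 = 0 := by norm_num
  have a8 : ((1:ℕ):ℤ) + 1 + 1 = 3 := by norm_num
  have b1 : q ^ (3 * (-2:ℤ)^2 + 2 * (-2)) = q^8 := by norm_num
  have b2 : q ^ (3 * (-1:ℤ)^2 + 2 * (-1)) = q := by norm_num
  have b3 : q ^ (3 * (0:ℤ)^2 + 2 * 0) = 1 := by norm_num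
  have b4 : q ^ (3 * (1:ℤ)^2 + 2 * 1) = q^5 := by norm_num
  rw [a1, a2, a3, a4, a5, a6, a7, a8, b1, b2, b3, b4, r0, r1, r2, r3, p3, k1, k1', mul_one, mul_one,
    k0, hp]
  ring

lemma main (q : ℂ) (hq : q ≠ 0) (h : ∀ k : ℕ, 0 < k → q ^ k ≠ 1) (M : ℕ) :
    qPoch (q^3) (q^3) M * coeff M (V q) = U q M ∧ 
    qPoch (q^3) (q^3) (M+1) * coeff (M+1) (V q) = U q (M+1) := by
  have h3 : ∀ k : ℕ, 0 < k → (q^3) ^ k ≠ 1 := by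
    intro k hk; rw [← pow_mul]; exact h _ (by omega)
  induction M with
  | zero =>
    constructor
    · rw [U_zero q h3, V_zero]; simp [qPoch]
    · have := V_one q h h3 _ rfl
      rw [V_zero] at this
      rw [zero_add, U_one q hq h3 _ rfl, ← this]
      simp [qPoch]
  | succ M ih =>
    refine ⟨ih.2, ?_⟩
    rw [U_rec q hq h3 M _ rfl, ← ih.1, ← ih.2]
    have := V_rec q h h3 M _ rfl
    rw [poch_succ, poch_succ]
    linear_combination qPoch (q^3) (q^3) M * (1 - q^3 * (q^3)^M) * this

end Capp

theorem finite_capparelli_two (M : ℕ) (q : ℂ) (hq : q ≠ 0) (hroot : ∀ k : ℕ, 0 < k → q ^ k ≠ 1) :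
    (∑' m : ℕ, ∑' n : ℕ, q ^ (Qcap m n + m + 3 * n) * qPoch (q ^ 3) (q ^ 3) M *
        (qPoch q q m)⁻¹ * (qPoch (q ^ 3) (q ^ 3) n)⁻¹ * qPochInvZ (q ^ 3) ((M : ℤ) - 2 * n - m)) +
      (∑' m : ℕ, ∑' n : ℕ, q ^ (Qcap m n + 3 * m + 6 * n + 1) * qPoch (q ^ 3) (q ^ 3) M *
        (qPoch q q m)⁻¹ * (qPoch (q ^ 3) (q ^ 3) n)⁻¹ * qPochInvZ (q ^ 3) ((M : ℤ) - 2 * n - m)) =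
    ∑ j ∈ Finset.Icc (-(M : ℤ) - 1) (M : ℤ),
      q ^ (3 * j ^ 2 + 2 * j) * qBinom (2 * (M : ℤ) + 1) ((M : ℤ) - j) (q ^ 3) := by
  rw [Capp.L_eq, (Capp.main q hq hroot M).1, Capp.U_fin]
  rfl
end
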